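/- Maximal inequality for the reciprocal of a harmonic function: let p, q ∈ (1,∞] satisfy 1/p + 1/q < 2/d and set p∗ := p/(p−1). There exist κ = κ(d,p,q) > 0 and C₄ < ∞, depending only on d, p, q, C_reg and C_riso, such that for every choice of edge weights ω, every x₀ ∈ V, n ≥ 1, every u : V → (0,∞) harmonic on B(x₀,n), every α ∈ (0,∞) and all σ′, σ with 1/2 ≤ σ′ < σ ≤ 1: max_{x∈B(x₀,σ′n)} u(x)⁻¹ ≤ (C₄·max{1, ‖μ^ω‖_{p,B(x₀,n)}·‖ν^ω‖_{q,B(x₀,n)}}/(σ−σ′)²)^{2p∗κ/α}·‖u⁻¹‖_{α,B(x₀,σn)}. -/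

import Mathlib

open Finset MeasureTheory
open scoped ENNReal

noncomputable section

namespace RCM

variable {V : Type*}

/-- `μ^ω(x)`, the sum of the weights of edges incident to `x`. -/
def mu (nbr : V → Finset V) (ω : V → V → ℝ) (x : V) : ℝ := ∑ y ∈ nbr x, ω x y

/-- `ν^ω(x)`, the sum of the reciprocals of the weights of edges incident to `x`. -/
def nu (nbr : V → Finset V) (ω : V → V → ℝ) (x : V) : ℝ := ∑ y ∈ nbr x, (ω x y)⁻¹

/-- `(L_Y^ω f)(x)`. -/
def lap (nbr : V → Finset V) (ω : V → V → ℝ) (f : V → ℝ) (x : V) : ℝ :=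
  (mu nbr ω x)⁻¹ * ∑ y ∈ nbr x, ω x y * (f y - f x)

/-- space-averaged norm `‖f‖_{p,A}` for a real exponent `p`. -/
def nrm (A : Finset V) (p : ℝ) (f : V → ℝ) : ℝ :=
  ((A.card : ℝ)⁻¹ * ∑ x ∈ A, |f x| ^ p) ^ (1 / p)

/-- weighted space-averaged norm `‖f‖_{p,A,φ}` for a real exponent `p`. -/
def nrmW (A : Finset V) (p : ℝ) (φ : V → ℝ) (f : V → ℝ) : ℝ :=
  ((A.card : ℝ)⁻¹ * ∑ x ∈ A, |f x| ^ p * φ x) ^ (1 / p)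

/-- space-averaged norm `‖f‖_{p,A}` for an extended exponent `p ∈ (0,∞]`;
for `p = ∞` this is the maximum of `|f|` over `A`. -/
def nrmE (A : Finset V) (p : ℝ≥0∞) (f : V → ℝ) : ℝ :=
  if p = ⊤ then sSup ((fun x => |f x|) '' (A : Set V)) else nrm A p.toReal f

/-- weighted average `(u)_{A,π}`. -/
def wavg (A : Finset V) (π : V → ℝ) (u : V → ℝ) : ℝ :=
  (∑ x ∈ A, π x * u x) / ∑ x ∈ A, π x

open Classical in
/-- relative internal boundary `∂_B A`. -/
def relBdry (G : SimpleGraph V) (B A : Finset V) : Finset V :=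
  A.filter fun z => ∃ y ∈ B, y ∉ A ∧ G.Adj z y

open Classical in
/-- internal boundary `∂B`. -/
def intBdry (G : SimpleGraph V) (B : Finset V) : Finset V :=
  B.filter fun z => ∃ y, y ∉ B ∧ G.Adj z y

open Classical in
/-- Dirichlet sum `Σ_{x,y ∈ B, x∼y} ω(x,y) (u(x)-u(y))²`. -/
def dSum (G : SimpleGraph V) (ω : V → V → ℝ) (B : Finset V) (u : V → ℝ) : ℝ :=
  ∑ x ∈ B, ∑ y ∈ B, if G.Adj x y then ω x y * (u x - u y) ^ 2 else 0

/-- `E^ω_{η²}(u) = (1/2) Σ_{x,y} η(x)² ω(x,y) (u(y)-u(x))²`. -/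
def energySq (ω : V → V → ℝ) (η u : V → ℝ) : ℝ :=
  (1 / 2) * ∑' x, ∑' y, η x ^ 2 * ω x y * (u y - u x) ^ 2

/-- `E^{ω,η}(u) = (1/2) Σ_{x,y} min(η(x)²,η(y)²) ω(x,y) (u(y)-u(x))²`. -/
def energyMin (ω : V → V → ℝ) (η u : V → ℝ) : ℝ :=
  (1 / 2) * ∑' x, ∑' y, min (η x ^ 2) (η y ^ 2) * ω x y * (u y - u x) ^ 2

/-- `‖∇η‖_{ℓ∞(E)}`, the supremum of `|η(y)-η(x)|` over edges `{x,y}`. -/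
def gradSup (G : SimpleGraph V) (η : V → ℝ) : ℝ :=
  sSup {r : ℝ | ∃ x y, G.Adj x y ∧ r = |η y - η x|}

/-- `u` is caloric on `I × B`: `∂_t u = L_Y^ω u` on `I × B`. -/
def Caloric (nbr : V → Finset V) (ω : V → V → ℝ) (I : Set ℝ) (B : Set V)
    (u : ℝ → V → ℝ) : Prop :=
  ∀ x ∈ B, ∀ t ∈ I, HasDerivAt (fun s => u s x) (lap nbr ω (u t) x) t

/-- `u` is sub-caloric on `I × B`: `∂_t u ≤ L_Y^ω u` on `I × B`. -/
def SubCaloric (nbr : V → Finset V) (ω : V → V → ℝ) (I : Set ℝ) (B : Set V)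
    (u : ℝ → V → ℝ) : Prop :=
  ∀ x ∈ B, ∀ t ∈ I, ∃ d, HasDerivAt (fun s => u s x) d t ∧ d ≤ lap nbr ω (u t) x

/-- `u` is super-caloric on `I × B`: `∂_t u ≥ L_Y^ω u` on `I × B`. -/
def SuperCaloric (nbr : V → Finset V) (ω : V → V → ℝ) (I : Set ℝ) (B : Set V)
    (u : ℝ → V → ℝ) : Prop :=
  ∀ x ∈ B, ∀ t ∈ I, ∃ d, HasDerivAt (fun s => u s x) d t ∧ lap nbr ω (u t) x ≤ d

/-- space-time norm `‖u‖_{p,[a,b]×B,φ}`. -/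
def nrmST (a b : ℝ) (B : Finset V) (p : ℝ) (φ : V → ℝ) (u : ℝ → V → ℝ) : ℝ :=
  ((b - a)⁻¹ * ∫ t in a..b, nrmW B p φ (u t) ^ p) ^ (1 / p)

end RCM

/-!
Averaging the relative isoperimetric inequality over the centres of balls of volume comparable to
`|A|` removes its dependence on a ball and gives an isoperimetric inequality for all finite sets
`A`. The coarea formula turns it into an `ℓ¹` Sobolev inequality, and Cauchy–Schwarz and Hölder turn
that into a weighted `ℓ²` Sobolev inequality at the price of a norm of `ν^ω`. If `u` is
superharmonic then every power `u^{-β}`, `β > 0`, is subharmonic by convexity of `t ↦ t^{-β}`, so it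
satisfies the Caccioppoli inequality, at the price of a norm of `μ^ω`. With `1/p + 1/p' = 1`,
combining the two improves the integrability of `u^{-β}` from `ℓ^{2p'}` to `ℓ^{2ρ}`, where `ρ > p'`
precisely because `1/p + 1/q < 2/d`. Iterating over shrinking balls with exponents `α (ρ/p')^k`
reaches the maximum.
-/

namespace RCM

variable {V : Type*} {G : SimpleGraph V} {ball : V → ℝ → Finset V}

/-- Volume regularity of order `d` with constant `C`, for the closed balls `ball x r`. -/
def VolumeRegular (ball : V → ℝ → Finset V) (d : ℕ) (C : ℝ) : Prop :=
  ∀ (x : V) (r : ℝ), 1 ≤ r →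
    C⁻¹ * r ^ d ≤ ((ball x r).card : ℝ) ∧ ((ball x r).card : ℝ) ≤ C * r ^ d

/-- The relative isoperimetric inequality `|∂_B A| / |A| ≥ C / r` for subsets `A` of at most half
the volume of a ball `B` of radius `r`. -/
def RelativeIsoperimetric (G : SimpleGraph V) (ball : V → ℝ → Finset V) (C : ℝ) : Prop :=
  ∀ (x : V) (r : ℝ) (A : Finset V), 1 ≤ r → A.Nonempty → A ⊆ ball x r →
    (A.card : ℝ) < ((ball x r).card : ℝ) / 2 →
    C / r ≤ ((relBdry G (ball x r) A).card : ℝ) / (A.card : ℝ)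

/-- The isoperimetric inequality `|A|^{1/s} ≤ K |∂A|` for arbitrary finite sets. In dimension `d`
the exponent `s` is the Hölder conjugate `d / (d - 1)`. -/
def Isoperimetric (G : SimpleGraph V) (s K : ℝ) : Prop :=
  ∀ A : Finset V, A.Nonempty → (A.card : ℝ) ^ (1 / s) ≤ K * ((intBdry G A).card : ℝ)

section Isoperimetry

variable [DecidableEq V]

lemma sum_card_inter_of_symm {N : V → Finset V} (hN : ∀ x y, x ∈ N y ↔ y ∈ N x)
    {X D : Finset V} (hX : ∀ z ∈ D, N z ⊆ X) :
    ∑ x ∈ X, (D ∩ N x).card = ∑ z ∈ D, (N z).card := by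
  have habove : ∀ x, bipartiteAbove (fun x z => z ∈ N x) D x = D ∩ N x := fun x => by
    rw [bipartiteAbove, filter_mem_eq_inter]
  have hbelow : ∀ z ∈ D, bipartiteBelow (fun x z => z ∈ N x) X z = N z := fun z hz => by
    ext x
    simp only [bipartiteBelow, mem_filter, hN z x]
    exact ⟨And.right, fun h => ⟨hX z hz h, h⟩⟩
  rw [← sum_congr rfl fun z hz => congrArg card (hbelow z hz),
    ← sum_card_bipartiteAbove_eq_sum_card_bipartiteBelow]
  simp only [habove]

lemma card_mul_le_of_card_inter_le {N : V → Finset V} (hN : ∀ x y, x ∈ N y ↔ y ∈ N x)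
    {A E : Finset V} (hEA : E ⊆ A) {m M c : ℝ} (hc : 0 ≤ c) (hm : ∀ x, m ≤ (N x).card)
    (hM : ∀ x, (N x).card ≤ M) (hloc : ∀ x, ((A ∩ N x).card : ℝ) ≤ c * (E ∩ N x).card) :
    A.card * m ≤ c * (E.card * M) := by
  have hsub : ∀ z ∈ A, N z ⊆ A.biUnion N := fun z hz => subset_biUnion_of_mem N hz
  calc (A.card : ℝ) * m ≤ ∑ z ∈ A, ((N z).card : ℝ) := by
        rw [← nsmul_eq_mul]
        exact card_nsmul_le_sum _ _ _ fun z _ => hm z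
    _ = ∑ x ∈ A.biUnion N, ((A ∩ N x).card : ℝ) := by
        exact_mod_cast (sum_card_inter_of_symm hN hsub).symm
    _ ≤ c * ∑ x ∈ A.biUnion N, ((E ∩ N x).card : ℝ) := by
        rw [mul_sum]
        exact sum_le_sum fun x _ => hloc x
    _ = c * ∑ z ∈ E, ((N z).card : ℝ) := by
        exact_mod_cast congrArg (fun k : ℕ => c * (k : ℝ))
          (sum_card_inter_of_symm hN fun z hz => hsub z (hEA hz))
    _ ≤ c * (E.card * M) := by
        rw [← nsmul_eq_mul]
        gcongr
        exact sum_le_card_nsmul _ _ _ fun z _ => hM z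

lemma relBdry_inter_subset (A B : Finset V) :
    relBdry G B (A ∩ B) ⊆ intBdry G A ∩ B := by
  intro z hz
  simp only [relBdry, intBdry, mem_filter, mem_inter] at hz ⊢
  obtain ⟨⟨hzA, hzB⟩, y, hyB, hyA, hadj⟩ := hz
  exact ⟨⟨hzA, y, fun h => hyA ⟨h, hyB⟩, hadj⟩, hzB⟩

lemma RelativeIsoperimetric.card_inter_le {C : ℝ} (hC : 0 < C)
    (hriso : RelativeIsoperimetric G ball C) {A : Finset V} {x : V} {r : ℝ} (hr : 1 ≤ r)
    (hA : (A.card : ℝ) < ((ball x r).card : ℝ) / 2) :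
    ((A ∩ ball x r).card : ℝ) ≤ r / C * ((intBdry G A ∩ ball x r).card : ℝ) := by
  rcases (A ∩ ball x r).eq_empty_or_nonempty with hempty | hne
  · rw [hempty, card_empty, Nat.cast_zero]
    positivity
  have hpos : (0 : ℝ) < (A ∩ ball x r).card := by exact_mod_cast hne.card_pos
  have hinter : ((A ∩ ball x r).card : ℝ) ≤ A.card := by
    exact_mod_cast card_le_card inter_subset_left
  have hrel := hriso x r _ hr hne inter_subset_right (hinter.trans_lt hA)
  have hbdry : ((relBdry G (ball x r) (A ∩ ball x r)).card : ℝ) ≤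
      (intBdry G A ∩ ball x r).card := by
    exact_mod_cast card_le_card (relBdry_inter_subset A (ball x r))
  rw [div_le_div_iff₀ (by linarith) hpos] at hrel
  rw [div_mul_eq_mul_div, le_div_iff₀ hC]
  nlinarith

end Isoperimetry

lemma VolumeRegular.one_le_const {d : ℕ} {C : ℝ} (hC : 0 < C) (hreg : VolumeRegular ball d C)
    (x : V) : 1 ≤ C := by
  have h : C⁻¹ ≤ C := by simpa using (hreg x 1 le_rfl).1.trans (hreg x 1 le_rfl).2
  by_contra! hlt
  linarith [(one_lt_inv₀ hC).2 hlt]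

lemma card_le_mul_card_intBdry {d : ℕ} {Creg Criso : ℝ} (hCreg : 0 < Creg) (hCriso : 0 < Criso)
    (hball : ∀ (x : V) (r : ℝ) (y : V), y ∈ ball x r ↔ (G.dist x y : ℝ) ≤ r)
    (hreg : VolumeRegular ball d Creg) (hriso : RelativeIsoperimetric G ball Criso)
    {A : Finset V} {r : ℝ} (hr : 1 ≤ r) (hA : 2 * Creg * A.card < r ^ d) :
    (A.card : ℝ) ≤ Creg ^ 2 / Criso * r * ((intBdry G A).card : ℝ) := by
  classical
  have : 0 < r ^ d := by positivity
  have hhalf : ∀ x, (A.card : ℝ) < ((ball x r).card : ℝ) / 2 := fun x => by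
    have hlow := (hreg x r hr).1
    rw [inv_mul_le_iff₀ hCreg] at hlow
    nlinarith
  have hsymm : ∀ x y, x ∈ ball y r ↔ y ∈ ball x r := fun x y => by
    rw [hball, hball, G.dist_comm]
  have havg := card_mul_le_of_card_inter_le (E := intBdry G A) hsymm (filter_subset _ _)
    (by positivity) (fun x => (hreg x r hr).1) (fun x => (hreg x r hr).2)
    fun x => hriso.card_inter_le hCriso hr (hhalf x)
  calc (A.card : ℝ) = A.card * (Creg⁻¹ * r ^ d) * (Creg * (r ^ d)⁻¹) := by field_simp
    _ ≤ r / Criso * ((intBdry G A).card * (Creg * r ^ d)) * (Creg * (r ^ d)⁻¹) := by gcongr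
    _ = Creg ^ 2 / Criso * r * ((intBdry G A).card : ℝ) := by field_simp

lemma VolumeRegular.isoperimetric {d : ℕ} {s Creg Criso : ℝ} (hds : (d : ℝ).HolderConjugate s)
    (hCreg : 0 < Creg) (hCriso : 0 < Criso)
    (hball : ∀ (x : V) (r : ℝ) (y : V), y ∈ ball x r ↔ (G.dist x y : ℝ) ≤ r)
    (hreg : VolumeRegular ball d Creg) (hriso : RelativeIsoperimetric G ball Criso) :
    Isoperimetric G s (Creg ^ 2 / Criso * (3 * Creg) ^ (1 / (d : ℝ))) := by
  intro A hA
  obtain ⟨z, -⟩ := id hA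
  have hcard : (1 : ℝ) ≤ A.card := by exact_mod_cast hA.card_pos
  have hCreg1 := hreg.one_le_const hCreg z
  have hd : d ≠ 0 := by exact_mod_cast hds.ne_zero
  -- The smallest scale, up to constants, at which `A` fills less than half of every ball.
  set r : ℝ := (3 * Creg * A.card) ^ (1 / (d : ℝ)) with hr
  have hr1 : 1 ≤ r := Real.one_le_rpow (by nlinarith) (by positivity)
  have hrd : r ^ d = 3 * Creg * A.card := by
    rw [hr, one_div, Real.rpow_inv_natCast_pow (by positivity) hd]
  have hle := card_le_mul_card_intBdry hCreg hCriso hball hreg hriso hr1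
    (A := A) (by rw [hrd]; nlinarith)
  have hs : 1 / s = 1 - 1 / (d : ℝ) := by rw [one_div, one_div, hds.one_sub_inv]
  have hApos : (0 : ℝ) < (A.card : ℝ) ^ (1 / (d : ℝ)) := by positivity
  rw [hr, Real.mul_rpow (by positivity) (by positivity)] at hle
  rw [hs, Real.rpow_sub (by linarith), Real.rpow_one, div_le_iff₀ hApos]
  linarith

section Sobolev

/-- The total variation `∑_{x ∈ S} ∑_{y ∼ x} (f x - f y)⁺`. Every edge is counted once, from its
higher endpoint, so that only `S ⊇ supp f` has to be summed over when `f ≥ 0`. -/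
def upVariation (nbr : V → Finset V) (S : Finset V) (f : V → ℝ) : ℝ :=
  ∑ x ∈ S, ∑ y ∈ nbr x, max (f x - f y) 0

variable {nbr : V → Finset V} {S : Finset V}

lemma upVariation_nonneg (f : V → ℝ) : 0 ≤ upVariation nbr S f :=
  sum_nonneg fun _ _ => sum_nonneg fun _ _ => le_max_right _ _

lemma max_add_zero_of_mul_nonneg {a b : ℝ} (h : 0 ≤ a * b) :
    max (a + b) 0 = max a 0 + max b 0 := by
  rcases mul_nonneg_iff.1 h with ⟨ha, hb⟩ | ⟨ha, hb⟩
  · rw [max_eq_left ha, max_eq_left hb, max_eq_left (add_nonneg ha hb)]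
  · rw [max_eq_right ha, max_eq_right hb, max_eq_right (add_nonpos ha hb), add_zero]

lemma upVariation_add_of_comonotone {f g : V → ℝ}
    (h : ∀ x y, 0 ≤ (f x - f y) * (g x - g y)) :
    upVariation nbr S (f + g) = upVariation nbr S f + upVariation nbr S g := by
  simp only [upVariation, Pi.add_apply, add_sub_add_comm, max_add_zero_of_mul_nonneg (h _ _),
    sum_add_distrib]

lemma mul_card_intBdry_le_upVariation_indicator (hnbr : ∀ x y, y ∈ nbr x ↔ G.Adj x y)
    {T : Finset V} (hTS : T ⊆ S) (m : ℝ) :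
    m * (intBdry G T).card ≤ upVariation nbr S ((T : Set V).indicator fun _ => m) := by
  classical
  have hjump : ∀ x ∈ intBdry G T, m ≤ ∑ y ∈ nbr x,
      max ((T : Set V).indicator (fun _ => m) x - (T : Set V).indicator (fun _ => m) y) 0 := by
    intro x hx
    obtain ⟨hxT, y, hyT, hadj⟩ := mem_filter.1 hx
    refine le_trans ?_ (single_le_sum (fun _ _ => le_max_right _ _) ((hnbr x y).2 hadj))
    rw [Set.indicator_of_mem (mem_coe.2 hxT), Set.indicator_of_notMem (mt mem_coe.1 hyT), sub_zero]
    exact le_max_left _ _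
  calc m * (intBdry G T).card = (intBdry G T).card • m := by rw [nsmul_eq_mul, mul_comm]
    _ ≤ ∑ x ∈ intBdry G T, _ := card_nsmul_le_sum _ _ _ hjump
    _ ≤ upVariation nbr S ((T : Set V).indicator fun _ => m) :=
        sum_le_sum_of_subset_of_nonneg ((filter_subset _ _).trans hTS)
          fun _ _ _ => sum_nonneg fun _ _ => le_max_right _ _

lemma sum_indicator_rpow_rpow_inv {T : Finset V} (hTS : T ⊆ S) {m s : ℝ} (hm : 0 ≤ m)
    (hs : 0 < s) :
    (∑ x ∈ S, (T : Set V).indicator (fun _ => m) x ^ s) ^ (1 / s) =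
      m * (T.card : ℝ) ^ (1 / s) := by
  have hsum : ∑ x ∈ S, (T : Set V).indicator (fun _ => m) x ^ s = T.card * m ^ s := by
    rw [← sum_subset hTS fun x _ hx => by
      rw [Set.indicator_of_notMem (mt mem_coe.1 hx), Real.zero_rpow hs.ne'], ← nsmul_eq_mul,
      ← sum_const]
    exact sum_congr rfl fun x hx => by rw [Set.indicator_of_mem (mem_coe.2 hx)]
  rw [hsum, Real.mul_rpow (by positivity) (by positivity), one_div,
    Real.rpow_rpow_inv hm hs.ne', mul_comm]

lemma Isoperimetric.sobolev_indicator (hnbr : ∀ x y, y ∈ nbr x ↔ G.Adj x y) {s K : ℝ}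
    (hs : 0 < s) (hK : 0 ≤ K) (hiso : Isoperimetric G s K) {T : Finset V} (hT : T.Nonempty)
    (hTS : T ⊆ S) {m : ℝ} (hm : 0 ≤ m) :
    (∑ x ∈ S, (T : Set V).indicator (fun _ => m) x ^ s) ^ (1 / s) ≤
      K * upVariation nbr S ((T : Set V).indicator fun _ => m) :=
  calc _ = m * (T.card : ℝ) ^ (1 / s) := sum_indicator_rpow_rpow_inv hTS hm hs
    _ ≤ m * (K * (intBdry G T).card) := by gcongr; exact hiso T hT
    _ = K * (m * (intBdry G T).card) := by ring
    _ ≤ _ := by gcongr; exact mul_card_intBdry_le_upVariation_indicator hnbr hTS m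

lemma exists_sub_indicator_of_pos_on {T : Finset V} (hT : T.Nonempty) {f : V → ℝ}
    (hpos : ∀ x ∈ T, 0 < f x) (hzero : ∀ x ∉ T, f x = 0) :
    ∃ (m : ℝ) (T' : Finset V) (g : V → ℝ), 0 < m ∧ T' ⊂ T ∧
      f = (T : Set V).indicator (fun _ => m) + g ∧ (∀ x ∈ T', 0 < g x) ∧ ∀ x ∉ T', g x = 0 := by
  classical
  obtain ⟨a, haT, hmin⟩ := T.exists_min_image f hT
  refine ⟨f a, {x ∈ T | f a < f x}, f - (T : Set V).indicator (fun _ => f a), hpos a haT,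
    filter_ssubset.2 ⟨a, haT, lt_irrefl _⟩, (add_sub_cancel _ _).symm, fun x hx => ?_,
    fun x hx => ?_⟩
  · obtain ⟨hxT, hlt⟩ := mem_filter.1 hx
    rwa [Pi.sub_apply, Set.indicator_of_mem (mem_coe.2 hxT), sub_pos]
  · by_cases hxT : x ∈ T
    · have hle : f x ≤ f a := not_lt.1 fun hlt => hx (mem_filter.2 ⟨hxT, hlt⟩)
      rw [Pi.sub_apply, Set.indicator_of_mem (mem_coe.2 hxT), hle.antisymm (hmin x hxT),
        sub_self]
    · rw [Pi.sub_apply, Set.indicator_of_notMem (mt mem_coe.1 hxT), hzero x hxT, sub_zero]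

lemma comonotone_indicator {T : Finset V} {m : ℝ} (hm : 0 ≤ m) {g : V → ℝ} (hg : ∀ x, 0 ≤ g x)
    (hzero : ∀ x ∉ T, g x = 0) (x y : V) :
    0 ≤ ((T : Set V).indicator (fun _ => m) x - (T : Set V).indicator (fun _ => m) y) *
      (g x - g y) := by
  by_cases hx : x ∈ T <;> by_cases hy : y ∈ T <;>
    simp only [Set.indicator, mem_coe, hx, hy, if_true, if_false, sub_self, zero_mul, le_refl]
  · rw [hzero y hy, sub_zero, sub_zero]
    exact mul_nonneg hm (hg x)
  · rw [hzero x hx, zero_sub, zero_sub, neg_mul_neg]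
    exact mul_nonneg hm (hg y)

-- A nonnegative function is peeled into multiples of indicators of nested level sets, along
-- which the variation is additive and the `ℓˢ` norm subadditive.
lemma Isoperimetric.sobolev_of_pos_on (hnbr : ∀ x y, y ∈ nbr x ↔ G.Adj x y) {s K : ℝ}
    (hs : 1 ≤ s) (hK : 0 ≤ K) (hiso : Isoperimetric G s K) {T : Finset V} (hTS : T ⊆ S)
    {f : V → ℝ} (hpos : ∀ x ∈ T, 0 < f x) (hzero : ∀ x ∉ T, f x = 0) :
    (∑ x ∈ S, f x ^ s) ^ (1 / s) ≤ K * upVariation nbr S f := by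
  have hs0 : 0 < s := by linarith
  induction T using Finset.strongInduction generalizing f with
  | H T ih =>
  rcases T.eq_empty_or_nonempty with rfl | hT
  · rw [sum_eq_zero fun x _ => by rw [hzero x (notMem_empty x), Real.zero_rpow hs0.ne'],
      Real.zero_rpow (by positivity)]
    exact mul_nonneg hK (upVariation_nonneg f)
  obtain ⟨m, T', g, hm, hT', rfl, hgpos, hgzero⟩ := exists_sub_indicator_of_pos_on hT hpos hzero
  have hg : ∀ x, 0 ≤ g x := fun x => by
    by_cases hx : x ∈ T'
    · exact (hgpos x hx).le
    · exact (hgzero x hx).ge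
  have hadd : upVariation nbr S ((T : Set V).indicator (fun _ => m) + g) = _ :=
    upVariation_add_of_comonotone
      (comonotone_indicator hm.le hg fun x hx => hgzero x (mt (@hT'.1 x) hx))
  rw [hadd, mul_add]
  calc _ ≤ (∑ x ∈ S, (T : Set V).indicator (fun _ => m) x ^ s) ^ (1 / s) +
          (∑ x ∈ S, g x ^ s) ^ (1 / s) :=
        Real.Lp_add_le_of_nonneg S hs
          (fun x _ => Set.indicator_nonneg (fun _ _ => hm.le) x) fun x _ => hg x
    _ ≤ _ := add_le_add (hiso.sobolev_indicator hnbr hs0 hK hT hTS hm.le)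
        (ih T' hT' (hT'.1.trans hTS) hgpos hgzero)

lemma Isoperimetric.sobolev (hnbr : ∀ x y, y ∈ nbr x ↔ G.Adj x y) {s K : ℝ} (hs : 1 ≤ s)
    (hK : 0 ≤ K) (hiso : Isoperimetric G s K) {f : V → ℝ} (hf : ∀ x, 0 ≤ f x)
    (hfS : ∀ x ∉ S, f x = 0) :
    (∑ x ∈ S, f x ^ s) ^ (1 / s) ≤ K * upVariation nbr S f := by
  classical
  refine hiso.sobolev_of_pos_on hnbr hs hK (filter_subset (fun x => 0 < f x) S)
    (fun x hx => (mem_filter.1 hx).2) fun x hx => ?_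
  by_contra hne
  exact hx (mem_filter.2 ⟨not_imp_comm.1 (hfS x) hne, (hf x).lt_of_ne' hne⟩)

end Sobolev

/-- `ω` is a conductance on the locally finite graph `G` with neighbourhoods `nbr`: a symmetric
function on `V × V` that is positive on edges and zero elsewhere. -/
structure IsWeightedGraph (G : SimpleGraph V) (nbr : V → Finset V) (ω : V → V → ℝ) : Prop where
  mem_nbr : ∀ x y, y ∈ nbr x ↔ G.Adj x y
  symm : ∀ x y, ω x y = ω y x
  pos : ∀ x y, G.Adj x y → 0 < ω x y
  eq_zero : ∀ x y, ¬ G.Adj x y → ω x y = 0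

section WeightedSobolev

variable {nbr : V → Finset V} {ω : V → V → ℝ}

/-- The Dirichlet energy `∑_{x ∈ S} ∑_{y ∼ x} ω(x,y) ((f x - f y)⁺)²`, with every edge counted
once, from its higher endpoint. -/
def upEnergy (nbr : V → Finset V) (ω : V → V → ℝ) (S : Finset V) (f : V → ℝ) : ℝ :=
  ∑ x ∈ S, ∑ y ∈ nbr x, ω x y * max (f x - f y) 0 ^ 2

namespace IsWeightedGraph

lemma weight_pos (hG : IsWeightedGraph G nbr ω) {x y : V} (h : y ∈ nbr x) : 0 < ω x y :=
  hG.pos x y ((hG.mem_nbr x y).1 h)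

lemma weight_nonneg (hG : IsWeightedGraph G nbr ω) (x y : V) : 0 ≤ ω x y := by
  by_cases h : G.Adj x y
  · exact (hG.pos x y h).le
  · exact (hG.eq_zero x y h).ge

lemma mu_nonneg (hG : IsWeightedGraph G nbr ω) (x : V) : 0 ≤ mu nbr ω x :=
  sum_nonneg fun _ h => (hG.weight_pos h).le

lemma nu_nonneg (hG : IsWeightedGraph G nbr ω) (x : V) : 0 ≤ nu nbr ω x :=
  sum_nonneg fun _ h => (inv_pos.2 (hG.weight_pos h)).le

lemma upEnergy_nonneg (hG : IsWeightedGraph G nbr ω) (S : Finset V) (f : V → ℝ) :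
    0 ≤ upEnergy nbr ω S f :=
  sum_nonneg fun _ _ => sum_nonneg fun _ h => mul_nonneg (hG.weight_pos h).le (sq_nonneg _)

end IsWeightedGraph

lemma rpow_sub_rpow_le {γ a b : ℝ} (hγ : 1 ≤ γ) (ha : 0 ≤ a) (hb : 0 ≤ b) :
    a ^ γ - b ^ γ ≤ γ * a ^ (γ - 1) * (a - b) := by
  have hγ0 : 0 < γ := by linarith
  rcases ha.eq_or_lt with rfl | ha
  · have hmul : γ * (0 : ℝ) ^ (γ - 1) * (0 - b) = -(γ * (0 : ℝ) ^ (γ - 1) * b) := by ring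
    rcases hγ.eq_or_lt with rfl | hγ1
    · simp
    · rw [hmul, Real.zero_rpow hγ0.ne', Real.zero_rpow (by linarith)]
      linarith [Real.rpow_nonneg hb γ]
  have hbern := one_add_mul_self_le_rpow_one_add (s := b / a - 1)
    (by linarith [div_nonneg hb ha.le]) hγ
  rw [add_sub_cancel, Real.div_rpow hb ha.le, le_div_iff₀ (by positivity)] at hbern
  have hpow : a ^ γ = a ^ (γ - 1) * a := by rw [← Real.rpow_add_one ha.ne', sub_add_cancel]
  have hexpand : (1 + γ * (b / a - 1)) * a ^ γ = a ^ γ - γ * a ^ (γ - 1) * (a - b) := by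
    rw [hpow]
    field_simp
    ring
  linarith

lemma upVariation_rpow_le {γ : ℝ} (hγ : 1 ≤ γ) (S : Finset V) {f : V → ℝ} (hf : ∀ x, 0 ≤ f x) :
    upVariation nbr S (fun x => f x ^ γ) ≤
      γ * ∑ x ∈ S, ∑ y ∈ nbr x, f x ^ (γ - 1) * max (f x - f y) 0 := by
  simp only [upVariation, mul_sum, ← mul_assoc]
  gcongr with x _ y _
  have hcoef : 0 ≤ γ * f x ^ (γ - 1) := mul_nonneg (by linarith) (Real.rpow_nonneg (hf x) _)
  exact max_le ((rpow_sub_rpow_le hγ (hf x) (hf y)).trans (by gcongr; exact le_max_left _ _))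
    (mul_nonneg hcoef (le_max_right _ _))

lemma IsWeightedGraph.sq_sum_mul_le_mul_upEnergy (hG : IsWeightedGraph G nbr ω) (S : Finset V)
    (w f : V → ℝ) :
    (∑ x ∈ S, ∑ y ∈ nbr x, w x * max (f x - f y) 0) ^ 2 ≤
      (∑ x ∈ S, w x ^ 2 * nu nbr ω x) * upEnergy nbr ω S f := by
  have hpos : ∀ e ∈ S.sigma nbr, 0 < ω e.1 e.2 := fun e he =>
    hG.weight_pos (mem_sigma.1 he).2
  have hCS := sum_sq_le_sum_mul_sum_of_sq_le_mul (S.sigma nbr)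
    (r := fun e => w e.1 * max (f e.1 - f e.2) 0)
    (f := fun e => w e.1 ^ 2 * (ω e.1 e.2)⁻¹)
    (g := fun e => ω e.1 e.2 * max (f e.1 - f e.2) 0 ^ 2)
    (fun e he => mul_nonneg (sq_nonneg _) (inv_pos.2 (hpos e he)).le)
    (fun e he => mul_nonneg (hpos e he).le (sq_nonneg _))
    (fun e he => by
      have := hpos e he
      field_simp
      rfl)
  simpa only [sum_sigma, upEnergy, nu, mul_sum] using hCS

lemma IsWeightedGraph.sq_upVariation_rpow_le (hG : IsWeightedGraph G nbr ω) {γ : ℝ}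
    (hγ : 1 ≤ γ) (S : Finset V) {f : V → ℝ} (hf : ∀ x, 0 ≤ f x) :
    upVariation nbr S (fun x => f x ^ γ) ^ 2 ≤
      γ ^ 2 * ((∑ x ∈ S, nu nbr ω x * f x ^ (2 * (γ - 1))) * upEnergy nbr ω S f) :=
  calc _ ≤ (γ * ∑ x ∈ S, ∑ y ∈ nbr x, f x ^ (γ - 1) * max (f x - f y) 0) ^ 2 := by
        gcongr
        exacts [upVariation_nonneg _, upVariation_rpow_le hγ S hf]
    _ ≤ γ ^ 2 * ((∑ x ∈ S, (f x ^ (γ - 1)) ^ 2 * nu nbr ω x) * upEnergy nbr ω S f) := by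
        rw [mul_pow]
        gcongr
        exact hG.sq_sum_mul_le_mul_upEnergy S (fun x => f x ^ (γ - 1)) f
    _ = _ := by
        congr 3 with x
        rw [mul_comm, ← Real.rpow_natCast, ← Real.rpow_mul (hf x), mul_comm (γ - 1), Nat.cast_ofNat]

lemma rpow_one_div_le_of_rpow_le_mul_of_sq_le {X K W M s q' ρ : ℝ} (hρ : 0 < ρ)
    (hρq : 1 / ρ = 2 / s - 1 / q') (hX : 0 ≤ X) (hM : 0 ≤ M) (hXW : X ^ (1 / s) ≤ K * W)
    (hW : W ^ 2 ≤ M * X ^ (1 / q')) : X ^ (1 / ρ) ≤ K ^ 2 * M := by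
  rcases hX.eq_or_lt with rfl | hXpos
  · rw [Real.zero_rpow (by positivity)]
    positivity
  rw [hρq, Real.rpow_sub hXpos, div_le_iff₀ (by positivity)]
  calc X ^ (2 / s) = (X ^ (1 / s)) ^ 2 := by
        rw [← Real.rpow_natCast, ← Real.rpow_mul hX]
        congr 1
        push_cast
        ring
    _ ≤ K ^ 2 * W ^ 2 := by
        rw [← mul_pow]
        gcongr
    _ ≤ K ^ 2 * M * X ^ (1 / q') := by
        rw [mul_assoc]
        gcongr

-- The `ℓ¹` Sobolev inequality is applied to `f ^ (2ρ/s)`.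
lemma IsWeightedGraph.sobolev (hG : IsWeightedGraph G nbr ω) {s K : ℝ} (hs : 1 ≤ s) (hK : 0 ≤ K)
    (hiso : Isoperimetric G s K) {q q' ρ : ℝ} (hq : q.HolderConjugate q') (hρ : 0 < ρ)
    (hρq : 1 / ρ = 2 / s - 1 / q') {S : Finset V} {f : V → ℝ} (hf : ∀ x, 0 ≤ f x)
    (hfS : ∀ x ∉ S, f x = 0) :
    (∑ x ∈ S, f x ^ (2 * ρ)) ^ (1 / ρ) ≤
      (K * (2 * ρ / s)) ^ 2 * ((∑ x ∈ S, nu nbr ω x ^ q) ^ (1 / q) * upEnergy nbr ω S f) := by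
  have hs0 : 0 < s := by linarith
  have hq' := hq.symm.pos
  have hγ : 2 * ρ / s - 1 = ρ / q' := by field_simp at hρq ⊢; linarith
  set γ := 2 * ρ / s
  have hγ1 : 1 ≤ γ := by linarith [div_pos hρ hq']
  have hE := hG.upEnergy_nonneg S f
  set X := ∑ x ∈ S, f x ^ (2 * ρ)
  have hX : 0 ≤ X := sum_nonneg fun x _ => Real.rpow_nonneg (hf x) _
  have hpow : ∀ a b, a * b = 2 * ρ → ∑ x ∈ S, (f x ^ a) ^ b = X := fun a b hab =>
    sum_congr rfl fun x _ => by rw [← Real.rpow_mul (hf x), hab]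
  have hsob : X ^ (1 / s) ≤ K * upVariation nbr S fun x => f x ^ γ := by
    rw [← hpow γ s (div_mul_cancel₀ _ hs0.ne')]
    exact hiso.sobolev hG.mem_nbr hs hK (fun x => Real.rpow_nonneg (hf x) _)
      fun x hx => by rw [hfS x hx, Real.zero_rpow (by linarith)]
  have hholder : ∑ x ∈ S, nu nbr ω x * f x ^ (2 * (γ - 1)) ≤
      (∑ x ∈ S, nu nbr ω x ^ q) ^ (1 / q) * X ^ (1 / q') := by
    rw [← hpow (2 * (γ - 1)) q' (by rw [hγ]; field_simp)]
    exact Real.inner_le_Lp_mul_Lq_of_nonneg S hq (fun x _ => hG.nu_nonneg x)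
      fun x _ => Real.rpow_nonneg (hf x) _
  have hN : 0 ≤ (∑ x ∈ S, nu nbr ω x ^ q) ^ (1 / q) :=
    Real.rpow_nonneg (sum_nonneg fun x _ => Real.rpow_nonneg (hG.nu_nonneg x) _) _
  calc X ^ (1 / ρ) ≤ K ^ 2 * (γ ^ 2 * ((∑ x ∈ S, nu nbr ω x ^ q) ^ (1 / q) *
        upEnergy nbr ω S f)) := by
        refine rpow_one_div_le_of_rpow_le_mul_of_sq_le hρ hρq hX (by positivity) hsob ?_
        refine (hG.sq_upVariation_rpow_le hγ1 S hf).trans ?_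
        rw [mul_assoc, mul_right_comm]
        gcongr
    _ = _ := by ring

end WeightedSobolev

section Subharmonic

variable {nbr : V → Finset V} {ω : V → V → ℝ}

lemma IsWeightedGraph.mu_mul_lap (hG : IsWeightedGraph G nbr ω) (f : V → ℝ) (x : V) :
    mu nbr ω x * lap nbr ω f x = ∑ y ∈ nbr x, ω x y * (f y - f x) := by
  rcases (nbr x).eq_empty_or_nonempty with hempty | hne
  · simp only [mu, hempty, sum_empty, zero_mul]
  · have hμ : 0 < mu nbr ω x := sum_pos (fun _ h => hG.weight_pos h) hne
    rw [lap, mul_inv_cancel_left₀ hμ.ne']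

lemma one_sub_mul_le_inv_rpow {t β : ℝ} (ht : 0 < t) (hβ : 0 ≤ β) :
    1 - β * (t - 1) ≤ t⁻¹ ^ β := by
  have hlog := mul_le_mul_of_nonneg_left (Real.log_le_sub_one_of_pos ht) hβ
  have hexp := Real.add_one_le_exp (Real.log t⁻¹ * β)
  rw [← Real.rpow_def_of_pos (inv_pos.2 ht), Real.log_inv] at hexp
  linarith

lemma mul_sub_le_inv_rpow_sub_inv_rpow {a b β : ℝ} (ha : 0 < a) (hb : 0 < b) (hβ : 0 ≤ β) :
    -(β * a⁻¹ ^ β / a) * (b - a) ≤ b⁻¹ ^ β - a⁻¹ ^ β := by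
  have hpow : b⁻¹ ^ β = a⁻¹ ^ β * (b / a)⁻¹ ^ β := by
    rw [← Real.mul_rpow (by positivity) (by positivity)]
    congr 1
    field_simp
  have htangent := mul_le_mul_of_nonneg_left (one_sub_mul_le_inv_rpow (div_pos hb ha) hβ)
    (by positivity : 0 ≤ a⁻¹ ^ β)
  have hexpand : a⁻¹ ^ β * (1 - β * (b / a - 1)) = a⁻¹ ^ β + -(β * a⁻¹ ^ β / a) * (b - a) := by
    field_simp
    ring
  rw [hpow]
  linarith

lemma IsWeightedGraph.lap_inv_rpow_nonneg (hG : IsWeightedGraph G nbr ω) {u : V → ℝ}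
    (hu : ∀ x, 0 < u x) {x : V} (hsup : lap nbr ω u x ≤ 0) {β : ℝ} (hβ : 0 ≤ β) :
    0 ≤ lap nbr ω (fun y => (u y)⁻¹ ^ β) x := by
  refine mul_nonneg (inv_nonneg.2 (hG.mu_nonneg x)) ?_
  have hslope : 0 ≤ β * (u x)⁻¹ ^ β / u x :=
    div_nonneg (mul_nonneg hβ (Real.rpow_nonneg (inv_pos.2 (hu x)).le _)) (hu x).le
  calc 0 ≤ -(β * (u x)⁻¹ ^ β / u x) * (mu nbr ω x * lap nbr ω u x) :=
        mul_nonneg_of_nonpos_of_nonpos (neg_nonpos.2 hslope)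
          (mul_nonpos_of_nonneg_of_nonpos (hG.mu_nonneg x) hsup)
    _ = ∑ y ∈ nbr x, ω x y * (-(β * (u x)⁻¹ ^ β / u x) * (u y - u x)) := by
        rw [hG.mu_mul_lap, mul_sum]
        exact sum_congr rfl fun y _ => mul_left_comm _ _ _
    _ ≤ ∑ y ∈ nbr x, ω x y * ((u y)⁻¹ ^ β - (u x)⁻¹ ^ β) :=
        sum_le_sum fun y hy => mul_le_mul_of_nonneg_left
          (mul_sub_le_inv_rpow_sub_inv_rpow (hu x) (hu y) hβ) (hG.weight_pos hy).le

end Subharmonic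

section Caccioppoli

variable {nbr : V → Finset V} {ω : V → V → ℝ} {T : Finset V} {g η : V → ℝ}

namespace IsWeightedGraph

lemma sum_weight_mul_eq_of_nbr_subset (hG : IsWeightedGraph G nbr ω) {x : V} (hx : nbr x ⊆ T)
    (F : V → ℝ) : ∑ y ∈ T, ω x y * F y = ∑ y ∈ nbr x, ω x y * F y :=
  (sum_subset hx fun y _ hy => by
    rw [hG.eq_zero x y (mt (hG.mem_nbr x y).2 hy), zero_mul]).symm

lemma sum_weight_le_mu (hG : IsWeightedGraph G nbr ω) (T : Finset V) (x : V) :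
    ∑ y ∈ T, ω x y ≤ mu nbr ω x := by
  classical
  calc ∑ y ∈ T, ω x y ≤ ∑ y ∈ T ∪ nbr x, ω x y * 1 := by
        simp only [mul_one]
        exact sum_le_sum_of_subset_of_nonneg subset_union_left fun y _ _ => hG.weight_nonneg x y
    _ = mu nbr ω x := by
        rw [hG.sum_weight_mul_eq_of_nbr_subset subset_union_right]
        simp only [mul_one, mu]

lemma sum_test_mul_sub_nonpos (hG : IsWeightedGraph G nbr ω) (hg : ∀ x, 0 ≤ g x)
    (hηT : ∀ x, η x ≠ 0 → nbr x ⊆ T) (hsub : ∀ x, η x ≠ 0 → 0 ≤ lap nbr ω g x) :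
    ∑ x ∈ T, ∑ y ∈ T, ω x y * (η x ^ 2 * g x * (g x - g y)) ≤ 0 := by
  refine sum_nonpos fun x _ => ?_
  by_cases hx : η x = 0
  · simp only [hx, ne_eq, OfNat.ofNat_ne_zero, not_false_eq_true, zero_pow, zero_mul, mul_zero,
      sum_const_zero, le_refl]
  have hlap : ∑ y ∈ T, ω x y * (η x ^ 2 * g x * (g x - g y)) =
      -(η x ^ 2 * g x * (mu nbr ω x * lap nbr ω g x)) := by
    rw [hG.sum_weight_mul_eq_of_nbr_subset (hηT x hx), hG.mu_mul_lap, mul_sum, ← sum_neg_distrib]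
    exact sum_congr rfl fun y _ => by ring
  rw [hlap, neg_nonpos]
  exact mul_nonneg (mul_nonneg (sq_nonneg _) (hg x)) (mul_nonneg (hG.mu_nonneg x) (hsub x hx))

lemma sum_mul_mul_sub_sq_le (hG : IsWeightedGraph G nbr ω) (g : V → ℝ) {ℓ : ℝ}
    (hηlip : ∀ x y, G.Adj x y → |η x - η y| ≤ ℓ) :
    ∑ x ∈ T, ∑ y ∈ T, ω x y * (g x * g y * (η x - η y) ^ 2) ≤
      ℓ ^ 2 * ∑ x ∈ T, mu nbr ω x * g x ^ 2 := by
  have hedge : ∀ x y, ω x y * (g x * g y * (η x - η y) ^ 2) ≤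
      ℓ ^ 2 / 2 * (ω x y * g x ^ 2) + ℓ ^ 2 / 2 * (ω y x * g y ^ 2) := fun x y => by
    by_cases h : G.Adj x y
    · have hsq : (η x - η y) ^ 2 ≤ ℓ ^ 2 := sq_le_sq.2 ((hηlip x y h).trans (le_abs_self ℓ))
      have hAMGM : g x * g y ≤ (g x ^ 2 + g y ^ 2) / 2 := by
        linarith [two_mul_le_add_sq (g x) (g y)]
      calc _ ≤ ω x y * ((g x ^ 2 + g y ^ 2) / 2 * ℓ ^ 2) := by
            have := hG.weight_nonneg x y
            gcongr
        _ = _ := by rw [hG.symm y x]; ring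
    · rw [hG.symm y x, hG.eq_zero x y h]
      simp only [zero_mul, mul_zero, add_zero, le_refl]
  have hfold : ∑ x ∈ T, ∑ y ∈ T, ω y x * g y ^ 2 = ∑ x ∈ T, ∑ y ∈ T, ω x y * g x ^ 2 := sum_comm
  calc _ ≤ ∑ x ∈ T, ∑ y ∈ T, (ℓ ^ 2 / 2 * (ω x y * g x ^ 2) + ℓ ^ 2 / 2 * (ω y x * g y ^ 2)) :=
        sum_le_sum fun x _ => sum_le_sum fun y _ => hedge x y
    _ = ℓ ^ 2 * ∑ x ∈ T, (∑ y ∈ T, ω x y) * g x ^ 2 := by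
        simp only [sum_add_distrib, ← mul_sum, hfold, sum_mul]
        ring
    _ ≤ _ := by
        gcongr with x _
        exact hG.sum_weight_le_mu T x

lemma caccioppoli (hG : IsWeightedGraph G nbr ω) (hg : ∀ x, 0 ≤ g x) {ℓ : ℝ}
    (hηT : ∀ x, η x ≠ 0 → nbr x ⊆ T) (hηlip : ∀ x y, G.Adj x y → |η x - η y| ≤ ℓ)
    (hsub : ∀ x, η x ≠ 0 → 0 ≤ lap nbr ω g x) :
    ∑ x ∈ T, ∑ y ∈ T, ω x y * (η x * g x - η y * g y) ^ 2 ≤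
      ℓ ^ 2 * ∑ x ∈ T, mu nbr ω x * g x ^ 2 := by
  have htest := hG.sum_test_mul_sub_nonpos hg hηT hsub
  have hswap : ∑ x ∈ T, ∑ y ∈ T, ω x y * (η y ^ 2 * g y * (g y - g x)) ≤ 0 := by
    rw [sum_comm]
    simpa only [hG.symm] using htest
  have hgrad := hG.sum_mul_mul_sub_sq_le (T := T) g hηlip
  calc _ = ∑ x ∈ T, ∑ y ∈ T, ω x y * (η x ^ 2 * g x * (g x - g y)) +
        ∑ x ∈ T, ∑ y ∈ T, ω x y * (η y ^ 2 * g y * (g y - g x)) +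
        ∑ x ∈ T, ∑ y ∈ T, ω x y * (g x * g y * (η x - η y) ^ 2) := by
        simp only [← sum_add_distrib]
        exact sum_congr rfl fun x _ => sum_congr rfl fun y _ => by ring
    _ ≤ _ := by linarith

lemma upEnergy_le_sum_sq (hG : IsWeightedGraph G nbr ω) {f : V → ℝ} (hf : ∀ x, 0 ≤ f x)
    (hfT : ∀ x, f x ≠ 0 → nbr x ⊆ T) :
    upEnergy nbr ω T f ≤ ∑ x ∈ T, ∑ y ∈ T, ω x y * (f x - f y) ^ 2 := by
  refine sum_le_sum fun x _ => ?_
  by_cases hx : f x = 0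
  · have hzero : ∀ y, max (f x - f y) 0 = 0 := fun y => max_eq_right (by linarith [hf y])
    simp only [hzero, ne_eq, OfNat.ofNat_ne_zero, not_false_eq_true, zero_pow, mul_zero,
      sum_const_zero]
    exact sum_nonneg fun y _ => mul_nonneg (hG.weight_nonneg x y) (sq_nonneg _)
  rw [hG.sum_weight_mul_eq_of_nbr_subset (hfT x hx)]
  refine sum_le_sum fun y _ => mul_le_mul_of_nonneg_left ?_ (hG.weight_nonneg x y)
  rw [← sq_abs (f x - f y)]
  gcongr
  exact max_le (le_abs_self _) (abs_nonneg _)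

end IsWeightedGraph

end Caccioppoli

section Cutoff

/-- The Lipschitz cutoff that equals `1` within distance `r - L` of `x₀`, vanishes beyond distance
`r`, and is linear in the distance in between. -/
def cutoff (G : SimpleGraph V) (x₀ : V) (r L : ℝ) (x : V) : ℝ :=
  max (min ((r - G.dist x₀ x) / L) 1) 0

variable {nbr : V → Finset V} {ω : V → V → ℝ} {x₀ : V} {r L : ℝ}

lemma cutoff_nonneg (x : V) : 0 ≤ cutoff G x₀ r L x := le_max_right _ _

lemma cutoff_eq_one (hL : 0 < L) {x : V} (hx : G.dist x₀ x ≤ r - L) :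
    cutoff G x₀ r L x = 1 := by
  have hratio : 1 ≤ (r - G.dist x₀ x) / L := by
    rw [one_le_div hL]
    linarith
  rw [cutoff, min_eq_right hratio, max_eq_left zero_le_one]

lemma dist_le_of_cutoff_ne_zero (hL : 0 < L) {x : V} (hx : cutoff G x₀ r L x ≠ 0) :
    G.dist x₀ x ≤ r := by
  by_contra! hlt
  exact hx (max_eq_right ((min_le_left _ _).trans
    (div_nonpos_of_nonpos_of_nonneg (by linarith) hL.le)))

lemma abs_dist_sub_dist_le_one {x y : V} (h : G.Adj x y) :
    |(G.dist x₀ x : ℝ) - G.dist x₀ y| ≤ 1 := by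
  have hdist := h.diff_dist_adj (u := x₀)
  have hle : (G.dist x₀ x : ℝ) ≤ G.dist x₀ y + 1 := by
    exact_mod_cast (by lia : G.dist x₀ x ≤ G.dist x₀ y + 1)
  have hge : (G.dist x₀ y : ℝ) ≤ G.dist x₀ x + 1 := by
    exact_mod_cast (by lia : G.dist x₀ y ≤ G.dist x₀ x + 1)
  exact abs_le.2 ⟨by linarith, by linarith⟩

lemma abs_cutoff_sub_cutoff_le (hL : 0 < L) {x y : V} (h : G.Adj x y) :
    |cutoff G x₀ r L x - cutoff G x₀ r L y| ≤ 1 / L :=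
  calc _ ≤ |(r - G.dist x₀ x) / L - (r - G.dist x₀ y) / L| :=
        (abs_max_sub_max_le_abs _ _ 0).trans (abs_inf_sub_inf_le_abs _ _ 1)
    _ = |(G.dist x₀ x : ℝ) - G.dist x₀ y| / L := by
        rw [← sub_div, sub_sub_sub_cancel_left, abs_div, abs_of_pos hL, abs_sub_comm]
    _ ≤ 1 / L := by
        gcongr
        exact abs_dist_sub_dist_le_one h

lemma IsWeightedGraph.upEnergy_indicator_le (hG : IsWeightedGraph G nbr ω) (S : Finset V)
    {g : V → ℝ} (hg : ∀ x, 0 ≤ g x) :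
    upEnergy nbr ω S ((S : Set V).indicator g) ≤ ∑ x ∈ S, mu nbr ω x * g x ^ 2 := by
  refine sum_le_sum fun x hx => ?_
  rw [mu, sum_mul]
  refine sum_le_sum fun y _ => mul_le_mul_of_nonneg_left ?_ (hG.weight_nonneg x y)
  rw [Set.indicator_of_mem (mem_coe.2 hx)]
  have hy : 0 ≤ (S : Set V).indicator g y := Set.indicator_nonneg (fun z _ => hg z) y
  gcongr
  exact max_le (by linarith) (hg x)

lemma IsWeightedGraph.upEnergy_cutoff_mul_le (hG : IsWeightedGraph G nbr ω)
    (hball : ∀ (x : V) (r : ℝ) (y : V), y ∈ ball x r ↔ (G.dist x y : ℝ) ≤ r)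
    (hL : 0 < L) {g : V → ℝ} (hg : ∀ x, 0 ≤ g x)
    (hsub : ∀ x ∈ ball x₀ r, 0 ≤ lap nbr ω g x) :
    upEnergy nbr ω (ball x₀ r) (fun x => cutoff G x₀ (r - 1) L x * g x) ≤
      (1 / L) ^ 2 * ∑ x ∈ ball x₀ r, mu nbr ω x * g x ^ 2 := by
  have hsupp : ∀ x, cutoff G x₀ (r - 1) L x ≠ 0 → nbr x ⊆ ball x₀ r := fun x hx y hy => by
    have hxy := abs_le.1 (abs_dist_sub_dist_le_one (x₀ := x₀) ((hG.mem_nbr x y).1 hy))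
    exact (hball _ _ _).2 (by linarith [dist_le_of_cutoff_ne_zero hL hx])
  refine (hG.upEnergy_le_sum_sq (fun x => mul_nonneg (cutoff_nonneg x) (hg x))
    fun x hx => hsupp x (left_ne_zero_of_mul hx)).trans ?_
  refine hG.caccioppoli hg hsupp (fun x y => abs_cutoff_sub_cutoff_le hL) fun x hx => hsub x ?_
  exact (hball _ _ _).2 (by linarith [dist_le_of_cutoff_ne_zero hL hx])

lemma IsWeightedGraph.exists_localization (hG : IsWeightedGraph G nbr ω)
    (hball : ∀ (x : V) (r : ℝ) (y : V), y ∈ ball x r ↔ (G.dist x y : ℝ) ≤ r)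
    {r' : ℝ} (hr : r' < r) {g : V → ℝ}
    (hg : ∀ x, 0 ≤ g x) (hsub : ∀ x ∈ ball x₀ r, 0 ≤ lap nbr ω g x) :
    ∃ f : V → ℝ, (∀ x, 0 ≤ f x) ∧ (∀ x ∉ ball x₀ r, f x = 0) ∧ (∀ x ∈ ball x₀ r', f x = g x) ∧
      upEnergy nbr ω (ball x₀ r) f ≤
        4 / (r - r') ^ 2 * ∑ x ∈ ball x₀ r, mu nbr ω x * g x ^ 2 := by
  have : 0 < r - r' := by linarith
  have hsum : 0 ≤ ∑ x ∈ ball x₀ r, mu nbr ω x * g x ^ 2 :=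
    sum_nonneg fun x _ => mul_nonneg (hG.mu_nonneg x) (sq_nonneg _)
  -- A cutoff supported in the interior of the ball needs a gap; for a bounded gap no cutoff is
  -- required because the energy of any function is at most `∑ μ f²`.
  rcases lt_or_ge (r - r') 2 with hsmall | hlarge
  · refine ⟨(ball x₀ r : Set V).indicator g, Set.indicator_nonneg fun x _ => hg x,
      fun x hx => Set.indicator_of_notMem (mt mem_coe.1 hx) g, fun x hx =>
      Set.indicator_of_mem (mem_coe.2 ((hball _ _ _).2 (((hball _ _ _).1 hx).trans hr.le))) g,
      (hG.upEnergy_indicator_le _ hg).trans (le_mul_of_one_le_left hsum ?_)⟩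
    rw [one_le_div (by positivity)]
    nlinarith
  · have hL : 0 < r - r' - 1 := by linarith
    refine ⟨fun x => cutoff G x₀ (r - 1) (r - r' - 1) x * g x,
      fun x => mul_nonneg (cutoff_nonneg x) (hg x), fun x hx => ?_, fun x hx => ?_,
      (hG.upEnergy_cutoff_mul_le hball hL hg hsub).trans
        (mul_le_mul_of_nonneg_right ?_ hsum)⟩
    · by_contra hne
      have hdist := dist_le_of_cutoff_ne_zero hL (left_ne_zero_of_mul hne)
      exact hx ((hball _ _ _).2 (by linarith))
    · dsimp only
      rw [cutoff_eq_one hL (by linarith [(hball _ _ _).1 hx]), one_mul]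
    · rw [div_pow, one_pow, div_le_div_iff₀ (by positivity) (by positivity)]
      nlinarith

end Cutoff

section Norms

/-- The `ℓᵗ` norm of `h` over `A`, normalised by the volume of an ambient set `B`. Keeping `B`
fixed while `A` shrinks makes the norms of different `A` comparable. -/
def relNrm (B A : Finset V) (t : ℝ) (h : V → ℝ) : ℝ :=
  ((B.card : ℝ)⁻¹ * ∑ x ∈ A, |h x| ^ t) ^ (1 / t)

variable {A A' B : Finset V} {t : ℝ}

lemma inv_card_mul_sum_abs_rpow_nonneg (B A : Finset V) (t : ℝ) (h : V → ℝ) :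
    0 ≤ (B.card : ℝ)⁻¹ * ∑ x ∈ A, |h x| ^ t := by
  positivity

lemma relNrm_nonneg (B A : Finset V) (t : ℝ) (h : V → ℝ) : 0 ≤ relNrm B A t h :=
  Real.rpow_nonneg (inv_card_mul_sum_abs_rpow_nonneg B A t h) _

lemma nrm_nonneg (A : Finset V) (t : ℝ) (h : V → ℝ) : 0 ≤ nrm A t h := relNrm_nonneg A A t h

lemma relNrm_mono (hA : A ⊆ A') (ht : 0 < t) (h : V → ℝ) : relNrm B A t h ≤ relNrm B A' t h := by
  refine Real.rpow_le_rpow (inv_card_mul_sum_abs_rpow_nonneg B A t h) ?_ (by positivity)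
  gcongr

lemma relNrm_le_nrm (hA : A.Nonempty) (hAB : A ⊆ B) (ht : 0 < t) (h : V → ℝ) :
    relNrm B A t h ≤ nrm A t h := by
  refine Real.rpow_le_rpow (inv_card_mul_sum_abs_rpow_nonneg B A t h) ?_ (by positivity)
  have : (0 : ℝ) < A.card := by exact_mod_cast hA.card_pos
  gcongr

lemma relNrm_congr {f h : V → ℝ} (hfh : ∀ x ∈ A, f x = h x) : relNrm B A t f = relNrm B A t h := by
  rw [relNrm, relNrm, sum_congr rfl fun x hx => by rw [hfh x hx]]

lemma relNrm_rpow {β : ℝ} (hβ : β ≠ 0) {h : V → ℝ} (hh : ∀ x, 0 ≤ h x) :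
    relNrm B A t (fun x => h x ^ β) = relNrm B A (β * t) h ^ β := by
  simp only [relNrm, abs_of_nonneg (hh _), abs_of_nonneg (Real.rpow_nonneg (hh _) _),
    ← Real.rpow_mul (hh _)]
  rw [← Real.rpow_mul (mul_nonneg (by positivity) (sum_nonneg fun x _ =>
    Real.rpow_nonneg (hh x) _)), one_div_mul_eq_div, div_mul_cancel_left₀ hβ, one_div]

lemma card_rpow_mul_relNrm (hB : B.Nonempty) (h : V → ℝ) :
    (B.card : ℝ) ^ (1 / t) * relNrm B A t h = (∑ x ∈ A, |h x| ^ t) ^ (1 / t) := by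
  have hcard : (0 : ℝ) < B.card := by exact_mod_cast hB.card_pos
  rw [relNrm, ← Real.mul_rpow hcard.le (inv_card_mul_sum_abs_rpow_nonneg B A t h),
    mul_inv_cancel_left₀ hcard.ne']

lemma abs_le_card_rpow_mul_relNrm (hB : B.Nonempty) (ht : 0 < t) (h : V → ℝ) {x : V}
    (hx : x ∈ A) : |h x| ≤ (B.card : ℝ) ^ (1 / t) * relNrm B A t h := by
  rw [card_rpow_mul_relNrm hB, ← Real.rpow_rpow_inv (abs_nonneg (h x)) ht.ne', one_div]
  gcongr
  exact single_le_sum (f := fun x => |h x| ^ t) (fun _ _ => by positivity) hx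

lemma inv_card_mul_sum_mul_le {p p' : ℝ} (hp : p.HolderConjugate p') (hB : B.Nonempty)
    (f h : V → ℝ) :
    (B.card : ℝ)⁻¹ * ∑ x ∈ A, f x * h x ≤ relNrm B A p f * relNrm B A p' h := by
  have hcard : (0 : ℝ) < B.card := by exact_mod_cast hB.card_pos
  rw [inv_mul_le_iff₀ hcard]
  calc ∑ x ∈ A, f x * h x
      ≤ (∑ x ∈ A, |f x| ^ p) ^ (1 / p) * (∑ x ∈ A, |h x| ^ p') ^ (1 / p') :=
        Real.inner_le_Lp_mul_Lq A f h hp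
    _ = (B.card : ℝ) ^ (1 / p + 1 / p') * (relNrm B A p f * relNrm B A p' h) := by
        rw [← card_rpow_mul_relNrm hB, ← card_rpow_mul_relNrm hB, Real.rpow_add hcard]
        ring
    _ = _ := by rw [hp.one_div_add_one_div, div_one, Real.rpow_one]

lemma nrm_le_sSup_abs (hA : A.Nonempty) (ht : 0 < t) (f : V → ℝ) :
    nrm A t f ≤ sSup ((fun x => |f x|) '' (A : Set V)) := by
  have hcard : (0 : ℝ) < A.card := by exact_mod_cast hA.card_pos
  have hle : ∀ x ∈ A, |f x| ≤ sSup ((fun x => |f x|) '' (A : Set V)) := fun x hx =>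
    le_csSup (A.finite_toSet.image _).bddAbove ⟨x, hx, rfl⟩
  have hsup : 0 ≤ sSup ((fun x => |f x|) '' (A : Set V)) :=
    hA.elim fun x hx => (abs_nonneg _).trans (hle x hx)
  rw [nrm, one_div, Real.rpow_inv_le_iff_of_pos (inv_card_mul_sum_abs_rpow_nonneg A A t f) hsup ht,
    inv_mul_le_iff₀ hcard, ← nsmul_eq_mul]
  exact sum_le_card_nsmul _ _ _ fun x hx => Real.rpow_le_rpow (abs_nonneg _) (hle x hx) ht.le

lemma nrm_mono_exponent (hA : A.Nonempty) {t' : ℝ} (ht : 0 < t) (htt' : t ≤ t') (f : V → ℝ) :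
    nrm A t f ≤ nrm A t' f := by
  have hcard : (0 : ℝ) < A.card := by exact_mod_cast hA.card_pos
  have ht' : 0 < t' := by linarith
  have hmean := Real.rpow_arith_mean_le_arith_mean_rpow A (fun _ => (A.card : ℝ)⁻¹)
    (fun x => |f x| ^ t) (fun _ _ => by positivity)
    (by rw [sum_const, nsmul_eq_mul, mul_inv_cancel₀ hcard.ne'])
    (fun _ _ => by positivity) ((one_le_div ht).2 htt')
  simp only [← mul_sum, ← Real.rpow_mul (abs_nonneg _), mul_div_cancel₀ t' ht.ne'] at hmean
  calc nrm A t f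
      = (((A.card : ℝ)⁻¹ * ∑ x ∈ A, |f x| ^ t) ^ (t' / t)) ^ (1 / t') := by
        rw [← Real.rpow_mul (inv_card_mul_sum_abs_rpow_nonneg A A t f),
          div_mul_div_cancel₀' ht'.ne', nrm]
    _ ≤ nrm A t' f := by
        rw [nrm]
        gcongr

lemma nrm_le_nrmE (hA : A.Nonempty) (ht : 0 < t) {p : ℝ≥0∞} (htp : ENNReal.ofReal t ≤ p)
    (f : V → ℝ) : nrm A t f ≤ nrmE A p f := by
  rw [nrmE]
  split_ifs with hp
  · exact nrm_le_sSup_abs hA ht f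
  · exact nrm_mono_exponent hA ht ((ENNReal.ofReal_le_iff_le_toReal hp).1 htp) f

end Norms

section MoserStep

lemma ball_subset_ball (hball : ∀ (x : V) (r : ℝ) (y : V), y ∈ ball x r ↔ (G.dist x y : ℝ) ≤ r)
    {r r' : ℝ} (h : r' ≤ r) (x : V) : ball x r' ⊆ ball x r := fun y hy =>
  (hball x r y).2 (((hball x r' y).1 hy).trans h)

lemma ball_nonempty (hball : ∀ (x : V) (r : ℝ) (y : V), y ∈ ball x r ↔ (G.dist x y : ℝ) ≤ r)
    {r : ℝ} (hr : 0 ≤ r) (x : V) : (ball x r).Nonempty :=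
  ⟨x, (hball x r x).2 (by simpa only [SimpleGraph.dist_self, Nat.cast_zero] using hr)⟩

lemma relNrm_sq (B A : Finset V) (t : ℝ) {h : V → ℝ} (hh : ∀ x, 0 ≤ h x) :
    relNrm B A t (fun x => h x ^ 2) = relNrm B A (2 * t) h ^ 2 := by
  simpa only [Real.rpow_two] using relNrm_rpow (B := B) (A := A) (t := t) two_ne_zero hh

lemma card_rpow_mul_relNrm_sq {A B : Finset V} (hB : B.Nonempty) (ρ : ℝ) {h : V → ℝ}
    (hh : ∀ x, 0 ≤ h x) :
    (B.card : ℝ) ^ (1 / ρ) * relNrm B A (2 * ρ) h ^ 2 = (∑ x ∈ A, h x ^ (2 * ρ)) ^ (1 / ρ) := by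
  rw [← relNrm_sq B A ρ hh, card_rpow_mul_relNrm hB]
  congr 1
  refine sum_congr rfl fun x _ => ?_
  rw [abs_of_nonneg (sq_nonneg _), ← Real.rpow_two, ← Real.rpow_mul (hh x)]

lemma sum_rpow_rpow_inv_le_card_rpow_mul_nrm {A B : Finset V} (hB : B.Nonempty) (hAB : A ⊆ B)
    {q : ℝ} (hq : 0 < q) {h : V → ℝ} (hh : ∀ x, 0 ≤ h x) :
    (∑ x ∈ A, h x ^ q) ^ (1 / q) ≤ (B.card : ℝ) ^ (1 / q) * nrm B q h :=
  calc _ = (∑ x ∈ A, |h x| ^ q) ^ (1 / q) := by simp only [abs_of_nonneg (hh _)]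
    _ = (B.card : ℝ) ^ (1 / q) * relNrm B A q h := (card_rpow_mul_relNrm hB h).symm
    _ ≤ _ := by
        gcongr
        exact relNrm_mono hAB hq h

lemma sum_mul_sq_le_card_mul {A B : Finset V} (hB : B.Nonempty) (hAB : A ⊆ B) {p p' : ℝ}
    (hp : p.HolderConjugate p') (w : V → ℝ) {h : V → ℝ} (hh : ∀ x, 0 ≤ h x) :
    ∑ x ∈ A, w x * h x ^ 2 ≤ B.card * (nrm B p w * relNrm B A (2 * p') h ^ 2) := by
  have hcard : (0 : ℝ) < B.card := by exact_mod_cast hB.card_pos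
  have hholder := inv_card_mul_sum_mul_le (A := A) hp hB w fun x => h x ^ 2
  rw [relNrm_sq B A p' hh, inv_mul_le_iff₀ hcard] at hholder
  refine hholder.trans ?_
  gcongr
  exact relNrm_mono hAB hp.pos w

lemma card_rpow_inv_mul_card_eq {B : Finset V} (hB : B.Nonempty) {d s q q' ρ : ℝ}
    (hds : d.HolderConjugate s) (hq : q.HolderConjugate q') (hρq : 1 / ρ = 2 / s - 1 / q') :
    (B.card : ℝ) ^ (1 / q) * B.card = (B.card : ℝ) ^ (1 / ρ) * ((B.card : ℝ) ^ (1 / d)) ^ 2 := by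
  have hcard : (0 : ℝ) < B.card := by exact_mod_cast hB.card_pos
  have hexp : 1 / q + 1 = 1 / ρ + 1 / d + 1 / d := by
    have hds' := hds.one_div_add_one_div
    have hq' := hq.one_div_add_one_div
    rw [hρq, div_eq_mul_one_div 2 s]
    linarith
  rw [sq, ← mul_assoc, ← Real.rpow_add_one hcard.ne', ← Real.rpow_add hcard,
    ← Real.rpow_add hcard, hexp]

/-- The constant `D₀` in the Moser step `‖g‖²_{2ρ,r'} ≤ D₀ R² / (r - r')² · ‖g‖²_{2p',r}` inside a
ball `B` of radius `R`, with the dependence on the weights in `‖μ‖_{p,B} ‖ν‖_{q,B}`. Here `C` comes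
from the volume growth `|B|^{1/d} ≤ C R` and `K` from isoperimetry. -/
def moserConst (nbr : V → Finset V) (ω : V → V → ℝ) (B : Finset V) (C K s ρ p q : ℝ) : ℝ :=
  4 * (C * K * (2 * ρ / s)) ^ 2 * (nrm B p (mu nbr ω) * nrm B q (nu nbr ω))

lemma IsWeightedGraph.relNrm_sq_le {nbr : V → Finset V} {ω : V → V → ℝ}
    (hG : IsWeightedGraph G nbr ω)
    (hball : ∀ (x : V) (r : ℝ) (y : V), y ∈ ball x r ↔ (G.dist x y : ℝ) ≤ r)
    {d s K C p p' q q' ρ : ℝ} (hds : d.HolderConjugate s) (hK : 0 ≤ K)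
    (hiso : Isoperimetric G s K) (hp : p.HolderConjugate p') (hq : q.HolderConjugate q')
    (hρ : 0 < ρ) (hρq : 1 / ρ = 2 / s - 1 / q') {x₀ : V} {R r r' : ℝ} (hR : 0 < R)
    (hvol : ((ball x₀ R).card : ℝ) ^ (1 / d) ≤ C * R) (hr : r' < r) (hrR : r ≤ R)
    {g : V → ℝ} (hg : ∀ x, 0 ≤ g x) (hsub : ∀ x ∈ ball x₀ r, 0 ≤ lap nbr ω g x) :
    relNrm (ball x₀ R) (ball x₀ r') (2 * ρ) g ^ 2 ≤
      moserConst nbr ω (ball x₀ R) C K s ρ p q * R ^ 2 / (r - r') ^ 2 *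
        relNrm (ball x₀ R) (ball x₀ r) (2 * p') g ^ 2 := by
  set B := ball x₀ R
  have hB : B.Nonempty := ball_nonempty hball hR.le x₀
  have hcard : (0 : ℝ) < B.card := by exact_mod_cast hB.card_pos
  have : 0 < r - r' := by linarith
  have hrB : ball x₀ r ⊆ B := ball_subset_ball hball hrR x₀
  have hμ := nrm_nonneg B p (mu nbr ω)
  have hν := nrm_nonneg B q (nu nbr ω)
  obtain ⟨f, hf, hfsupp, hfg, henergy⟩ := hG.exists_localization hball hr hg hsub
  have hfE := hG.upEnergy_nonneg (ball x₀ r) f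
  have hfnorm : relNrm B (ball x₀ r') (2 * ρ) g ≤ relNrm B (ball x₀ r) (2 * ρ) f := by
    rw [← relNrm_congr hfg]
    exact relNrm_mono (ball_subset_ball hball hr.le x₀) (by positivity) f
  refine le_of_mul_le_mul_left ?_ (Real.rpow_pos_of_pos hcard (1 / ρ))
  calc _ ≤ (B.card : ℝ) ^ (1 / ρ) * relNrm B (ball x₀ r) (2 * ρ) f ^ 2 := by
        have := relNrm_nonneg B (ball x₀ r') (2 * ρ) g
        gcongr
    _ ≤ (K * (2 * ρ / s)) ^ 2 * ((∑ x ∈ ball x₀ r, nu nbr ω x ^ q) ^ (1 / q) *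
          upEnergy nbr ω (ball x₀ r) f) := by
        rw [card_rpow_mul_relNrm_sq hB ρ hf]
        exact hG.sobolev hds.symm.lt.le hK hiso hq hρ hρq hf hfsupp
    _ ≤ (K * (2 * ρ / s)) ^ 2 * ((B.card : ℝ) ^ (1 / q) * nrm B q (nu nbr ω) *
          (4 / (r - r') ^ 2 * (B.card * (nrm B p (mu nbr ω) *
            relNrm B (ball x₀ r) (2 * p') g ^ 2)))) := by
        gcongr
        · exact sum_rpow_rpow_inv_le_card_rpow_mul_nrm hB hrB hq.pos hG.nu_nonneg
        · exact henergy.trans (by gcongr; exact sum_mul_sq_le_card_mul hB hrB hp _ hg)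
    _ = (K * (2 * ρ / s)) ^ 2 * (nrm B q (nu nbr ω) * (4 / (r - r') ^ 2 *
          (nrm B p (mu nbr ω) * relNrm B (ball x₀ r) (2 * p') g ^ 2))) *
          ((B.card : ℝ) ^ (1 / ρ) * ((B.card : ℝ) ^ (1 / d)) ^ 2) := by
        rw [← card_rpow_inv_mul_card_eq hB hds hq hρq]
        ring
    _ ≤ (K * (2 * ρ / s)) ^ 2 * (nrm B q (nu nbr ω) * (4 / (r - r') ^ 2 *
          (nrm B p (mu nbr ω) * relNrm B (ball x₀ r) (2 * p') g ^ 2))) *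
          ((B.card : ℝ) ^ (1 / ρ) * (C * R) ^ 2) := by gcongr
    _ = _ := by
        rw [moserConst]
        ring

end MoserStep

section MoserIteration

lemma le_rpow_mul_of_le_rpow_mul {b E : ℝ} (hb : 1 ≤ b) {e F : ℕ → ℝ} (he : ∀ k, 0 ≤ e k)
    (hE : HasSum e E) (hF : 0 ≤ F 0) (hstep : ∀ k, F (k + 1) ≤ b ^ e k * F k) (k : ℕ) :
    F k ≤ b ^ E * F 0 := by
  have hb0 : 0 < b := by linarith
  have hpartial : ∀ k, F k ≤ b ^ (∑ j ∈ range k, e j) * F 0 := fun k => by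
    induction k with
    | zero => rw [range_zero, sum_empty, Real.rpow_zero, one_mul]
    | succ k ih =>
      calc F (k + 1) ≤ b ^ e k * (b ^ (∑ j ∈ range k, e j) * F 0) :=
            (hstep k).trans (by gcongr)
        _ = b ^ (∑ j ∈ range (k + 1), e j) * F 0 := by
            rw [← mul_assoc, ← Real.rpow_add hb0, sum_range_succ, add_comm]
  refine (hpartial k).trans ?_
  gcongr
  exact sum_le_hasSum _ (fun j _ => he j) hE

lemma hasSum_succ_mul_pow {θ : ℝ} (hθ : 0 ≤ θ) (hθ1 : θ < 1) :
    HasSum (fun k : ℕ => ((k : ℝ) + 1) * θ ^ k) (1 / (1 - θ) ^ 2) := by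
  have h := hasSum_choose_mul_geometric_of_norm_lt_one 1 (by rwa [Real.norm_of_nonneg hθ])
  simpa only [Nat.choose_one_right, Nat.cast_add, Nat.cast_one, Nat.reduceAdd] using h

/-- The radii `r = r₀ > r₁ > ⋯ > r'` of the Moser iteration, with geometrically decreasing gaps. -/
def moserRadius (r' r : ℝ) (k : ℕ) : ℝ := r' + (r - r') / 2 ^ k

variable {r r' : ℝ}

lemma moserRadius_zero (r' r : ℝ) : moserRadius r' r 0 = r := by
  rw [moserRadius, pow_zero, div_one, add_sub_cancel]

lemma le_moserRadius (hr : r' < r) (k : ℕ) : r' ≤ moserRadius r' r k :=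
  le_add_of_nonneg_right (div_nonneg (sub_nonneg.2 hr.le) (by positivity))

lemma moserRadius_le (hr : r' < r) (k : ℕ) : moserRadius r' r k ≤ r := by
  have := div_le_self (sub_nonneg.2 hr.le) (one_le_pow₀ (n := k) (one_le_two (α := ℝ)))
  rw [moserRadius]
  linarith

lemma moserRadius_sub_succ (r' r : ℝ) (k : ℕ) :
    moserRadius r' r k - moserRadius r' r (k + 1) = (r - r') / 2 ^ (k + 1) := by
  rw [moserRadius, moserRadius, pow_succ]
  field_simp
  ring

lemma moserRadius_succ_lt (hr : r' < r) (k : ℕ) :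
    moserRadius r' r (k + 1) < moserRadius r' r k := by
  have : 0 < (r - r') / 2 ^ (k + 1) := div_pos (sub_pos.2 hr) (by positivity)
  linarith [moserRadius_sub_succ r' r k]

lemma div_sq_moserRadius_gap_le {D : ℝ} (hr : r' < r) (hD : (r - r') ^ 2 ≤ D) (k : ℕ) :
    D / (moserRadius r' r k - moserRadius r' r (k + 1)) ^ 2 ≤
      (4 * D / (r - r') ^ 2) ^ (k + 1) := by
  have : 0 < r - r' := sub_pos.2 hr
  have hone : 1 ≤ D / (r - r') ^ 2 := (one_le_div (by positivity)).2 hD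
  calc D / (moserRadius r' r k - moserRadius r' r (k + 1)) ^ 2
      = 4 ^ (k + 1) * (D / (r - r') ^ 2) := by
        rw [moserRadius_sub_succ, div_pow, ← pow_mul, mul_comm _ 2, pow_mul]
        norm_num
        field_simp
    _ ≤ 4 ^ (k + 1) * (D / (r - r') ^ 2) ^ (k + 1) := by
        gcongr
        exact le_self_pow₀ hone (Nat.succ_ne_zero k)
    _ = (4 * D / (r - r') ^ 2) ^ (k + 1) := by rw [← mul_pow, mul_div_assoc]

lemma le_of_forall_le_rpow_one_div_mul {N α θ v M : ℝ} (hN : N ≠ 0) (hθ : |θ| < 1)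
    (hv : ∀ k : ℕ, v ≤ N ^ (1 / (α / θ ^ k)) * M) : v ≤ M := by
  have hexp : Filter.Tendsto (fun k : ℕ => 1 / (α / θ ^ k)) Filter.atTop (nhds 0) := by
    simpa only [one_div_div, zero_div] using
      (tendsto_pow_atTop_nhds_zero_of_abs_lt_one hθ).div_const α
  have hlim := (tendsto_const_nhds.rpow hexp (Or.inl hN)).mul_const M
  rw [Real.rpow_zero, one_mul] at hlim
  exact ge_of_tendsto' hlim hv

-- The exponents are `α / θ ^ k`, along which the factor `N ^ (1 / t)` disappears.
lemma le_rpow_mul_of_moser_step {Φ : ℝ → ℝ → ℝ} {D N c v α θ : ℝ} (hr : r' < r)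
    (hD : (r - r') ^ 2 ≤ D) (hN : 0 < N) (hc : 0 ≤ c) (hα : 0 < α) (hθ : 0 < θ) (hθ1 : θ < 1)
    (hΦ : ∀ τ t, 0 ≤ Φ τ t)
    (hstep : ∀ τ' τ t, τ' < τ → τ ≤ r → 0 < t →
      Φ τ' (t / θ) ≤ (D / (τ - τ') ^ 2) ^ (c / t) * Φ τ t)
    (hv : ∀ τ t, r' ≤ τ → 0 < t → v ≤ N ^ (1 / t) * Φ τ t) :
    v ≤ (4 * D / (r - r') ^ 2) ^ (c / (1 - θ) ^ 2 / α) * Φ r α := by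
  have : 0 < r - r' := sub_pos.2 hr
  have hD0 : 0 < D := lt_of_lt_of_le (by positivity) hD
  set b := 4 * D / (r - r') ^ 2
  have hb : 1 ≤ b := (one_le_div (by positivity)).2 (by linarith)
  have ht : ∀ k : ℕ, 0 < α / θ ^ k := fun k => by positivity
  have hrec : ∀ k, Φ (moserRadius r' r (k + 1)) (α / θ ^ (k + 1)) ≤
      b ^ (c / α * ((k + 1) * θ ^ k)) * Φ (moserRadius r' r k) (α / θ ^ k) := fun k => by
    have h := hstep _ _ _ (moserRadius_succ_lt hr k) (moserRadius_le hr k) (ht k)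
    rw [div_div, ← pow_succ] at h
    refine h.trans (mul_le_mul_of_nonneg_right ?_ (hΦ _ _))
    calc _ ≤ (b ^ (k + 1)) ^ (c / (α / θ ^ k)) := by
          gcongr
          exact div_sq_moserRadius_gap_le hr hD k
      _ = b ^ (c / α * ((k + 1) * θ ^ k)) := by
          rw [← Real.rpow_natCast, ← Real.rpow_mul (by positivity)]
          congr 1
          push_cast
          field_simp
  have hbound := le_rpow_mul_of_le_rpow_mul hb
    (F := fun k => Φ (moserRadius r' r k) (α / θ ^ k)) (fun k => by positivity)
    ((hasSum_succ_mul_pow hθ.le hθ1).mul_left (c / α)) (hΦ _ _) hrec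
  rw [moserRadius_zero, pow_zero, div_one, div_mul_div_comm, mul_one, mul_comm α, ← div_div]
    at hbound
  exact le_of_forall_le_rpow_one_div_mul (α := α) hN.ne' (by rwa [abs_of_pos hθ])
    fun k => (hv (moserRadius r' r k) (α / θ ^ k) (le_moserRadius hr k) (ht k)).trans
      (mul_le_mul_of_nonneg_left (hbound k) (Real.rpow_nonneg hN.le _))

end MoserIteration

section MaximalInequality

variable {nbr : V → Finset V} {ω : V → V → ℝ} {h : V → ℝ} {x₀ : V}
  {d s K C p p' q q' ρ D R r : ℝ}

lemma moserConst_nonneg (nbr : V → Finset V) (ω : V → V → ℝ) (B : Finset V) (C K s ρ p q : ℝ) :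
    0 ≤ moserConst nbr ω B C K s ρ p q :=
  mul_nonneg (by positivity) (mul_nonneg (nrm_nonneg _ _ _) (nrm_nonneg _ _ _))

lemma le_rpow_inv_mul_of_rpow_le_mul_rpow {a b c s : ℝ} (hs : 0 < s) (ha : 0 ≤ a) (hc : 0 ≤ c)
    (hb : 0 ≤ b) (h : a ^ s ≤ c * b ^ s) : a ≤ c ^ s⁻¹ * b := by
  refine (Real.rpow_le_rpow_iff ha (by positivity) hs).1 ?_
  rwa [Real.mul_rpow (by positivity) hb, Real.rpow_inv_rpow hc hs.ne']

lemma IsWeightedGraph.relNrm_le_rpow_mul (hG : IsWeightedGraph G nbr ω)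
    (hball : ∀ (x : V) (r : ℝ) (y : V), y ∈ ball x r ↔ (G.dist x y : ℝ) ≤ r)
    (hds : d.HolderConjugate s) (hK : 0 ≤ K) (hiso : Isoperimetric G s K)
    (hp : p.HolderConjugate p') (hq : q.HolderConjugate q') (hρ : 0 < ρ)
    (hρq : 1 / ρ = 2 / s - 1 / q') (hR : 0 < R)
    (hvol : ((ball x₀ R).card : ℝ) ^ (1 / d) ≤ C * R)
    (hD : moserConst nbr ω (ball x₀ R) C K s ρ p q * R ^ 2 ≤ D) {τ' τ t : ℝ} (hτ : τ' < τ)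
    (hτR : τ ≤ R) (ht : 0 < t) (hh : ∀ x, 0 ≤ h x)
    (hsub : ∀ x ∈ ball x₀ τ, 0 ≤ lap nbr ω (fun y => h y ^ (t / (2 * p'))) x) :
    relNrm (ball x₀ R) (ball x₀ τ') (t / (p' / ρ)) h ≤
      (D / (τ - τ') ^ 2) ^ (p' / t) * relNrm (ball x₀ R) (ball x₀ τ) t h := by
  have hp' := hp.symm.pos
  set B := ball x₀ R
  have hDnonneg := mul_nonneg (moserConst_nonneg nbr ω B C K s ρ p q) (sq_nonneg R)
  have hstep := hG.relNrm_sq_le hball hds hK hiso hp hq hρ hρq hR hvol hτ hτR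
    (fun x => Real.rpow_nonneg (hh x) _) hsub
  have hpow : ∀ A t', relNrm B A t' (fun y => h y ^ (t / (2 * p'))) ^ 2 =
      relNrm B A (t / (2 * p') * t') h ^ (t / p') := fun A t' => by
    rw [relNrm_rpow (by positivity) hh, ← Real.rpow_natCast,
      ← Real.rpow_mul (relNrm_nonneg _ _ _ _)]
    congr 1
    push_cast
    field_simp
  rw [hpow, hpow, div_mul_cancel₀ t (by positivity : 2 * p' ≠ 0),
    show t / (2 * p') * (2 * ρ) = t / (p' / ρ) by field_simp] at hstep
  rw [← inv_div t p']
  refine le_rpow_inv_mul_of_rpow_le_mul_rpow (by positivity) (relNrm_nonneg _ _ _ _)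
    (div_nonneg (hDnonneg.trans hD) (sq_nonneg _)) (relNrm_nonneg _ _ _ _) (hstep.trans ?_)
  have := Real.rpow_nonneg (relNrm_nonneg B (ball x₀ τ) t h) (t / p')
  gcongr

lemma IsWeightedGraph.le_rpow_mul_nrm (hG : IsWeightedGraph G nbr ω)
    (hball : ∀ (x : V) (r : ℝ) (y : V), y ∈ ball x r ↔ (G.dist x y : ℝ) ≤ r)
    (hds : d.HolderConjugate s) (hK : 0 ≤ K) (hiso : Isoperimetric G s K)
    (hp : p.HolderConjugate p') (hq : q.HolderConjugate q') (hρ : p' < ρ)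
    (hρq : 1 / ρ = 2 / s - 1 / q') (hR : 0 < R)
    (hvol : ((ball x₀ R).card : ℝ) ^ (1 / d) ≤ C * R)
    (hD : moserConst nbr ω (ball x₀ R) C K s ρ p q * R ^ 2 ≤ D) {r' α : ℝ} (hr : r' < r)
    (hrR : r ≤ R) (hrD : (r - r') ^ 2 ≤ D) (hα : 0 < α) (hh : ∀ x, 0 ≤ h x)
    (hsub : ∀ x ∈ ball x₀ r, ∀ β : ℝ, 0 < β → 0 ≤ lap nbr ω (fun y => h y ^ β) x)
    {x : V} (hx : x ∈ ball x₀ r') :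
    h x ≤ (4 * D / (r - r') ^ 2) ^ (p' / (1 - p' / ρ) ^ 2 / α) * nrm (ball x₀ r) α h := by
  have hp' := hp.symm.pos
  have hρ0 : 0 < ρ := hp'.trans hρ
  have hB : (ball x₀ R).Nonempty := ball_nonempty hball hR.le x₀
  calc h x ≤ (4 * D / (r - r') ^ 2) ^ (p' / (1 - p' / ρ) ^ 2 / α) *
        relNrm (ball x₀ R) (ball x₀ r) α h := by
        refine le_rpow_mul_of_moser_step (Φ := fun τ t => relNrm (ball x₀ R) (ball x₀ τ) t h) hr hrD
          (Nat.cast_pos.2 hB.card_pos) hp'.le hα (by positivity) ((div_lt_one hρ0).2 hρ)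
          (fun τ t => relNrm_nonneg _ _ _ _) (fun τ' τ t hτ hτr ht => ?_) fun τ t hτ ht => ?_
        · exact hG.relNrm_le_rpow_mul hball hds hK hiso hp hq hρ0 hρq hR hvol hD hτ
            (hτr.trans hrR) ht hh fun y hy =>
              hsub y (ball_subset_ball hball hτr x₀ hy) _ (by positivity)
        · exact (le_abs_self _).trans
            (abs_le_card_rpow_mul_relNrm hB ht h (ball_subset_ball hball hτ x₀ hx))
    _ ≤ _ := by
        have : 0 ≤ D := (sq_nonneg _).trans hrD
        gcongr
        exact relNrm_le_nrm ⟨x, ball_subset_ball hball hr.le x₀ hx⟩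
          (ball_subset_ball hball hrR x₀) hα h

end MaximalInequality

section Exponents

lemma toReal_inv_add_toReal_inv_lt {d : ℕ} (hd : d ≠ 0) {p q : ℝ≥0∞}
    (hpq : p⁻¹ + q⁻¹ < 2 / (d : ℝ≥0∞)) : (p⁻¹).toReal + (q⁻¹).toReal < 2 / (d : ℝ) := by
  have hdtop : 2 / (d : ℝ≥0∞) ≠ ⊤ := ENNReal.div_ne_top (by norm_num) (by exact_mod_cast hd)
  obtain ⟨hp, hq⟩ := ENNReal.add_ne_top.1 hpq.ne_top
  simpa only [ENNReal.toReal_add hp hq, ENNReal.toReal_div, ENNReal.toReal_ofNat,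
    ENNReal.toReal_natCast] using ENNReal.toReal_strict_mono hdtop hpq

lemma ofReal_inv_toReal_inv_add_le {p : ℝ≥0∞} (hp : p ≠ 0) {ε : ℝ} (hε : 0 < ε) :
    ENNReal.ofReal ((p⁻¹).toReal + ε)⁻¹ ≤ p := by
  rcases eq_or_ne p ⊤ with rfl | htop
  · exact le_top
  · rw [ENNReal.ofReal_le_iff_le_toReal htop, ENNReal.toReal_inv]
    exact inv_le_of_inv_le₀ (ENNReal.toReal_pos hp htop) (by linarith)

lemma exists_finite_exponents {d : ℕ} (hd : 2 ≤ d) {p q : ℝ≥0∞}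
    (hpq : p⁻¹ + q⁻¹ < 2 / (d : ℝ≥0∞)) :
    ∃ P Q : ℝ, 1 < P ∧ 1 < Q ∧ ENNReal.ofReal P ≤ p ∧ ENNReal.ofReal Q ≤ q ∧
      P⁻¹ + Q⁻¹ < 2 / (d : ℝ) := by
  have hab := toReal_inv_add_toReal_inv_lt (by omega) hpq
  obtain ⟨hp, hq⟩ := ENNReal.add_ne_top.1 hpq.ne_top
  have hd2 : 2 / (d : ℝ) ≤ 1 := (div_le_one (by positivity)).2 (by exact_mod_cast hd)
  set a := (p⁻¹).toReal
  set b := (q⁻¹).toReal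
  have ha : 0 ≤ a := ENNReal.toReal_nonneg
  have hb : 0 ≤ b := ENNReal.toReal_nonneg
  obtain ⟨ε, hε, hεab⟩ : ∃ ε : ℝ, 0 < ε ∧ a + ε + (b + ε) < 2 / (d : ℝ) :=
    ⟨(2 / (d : ℝ) - (a + b)) / 3, by linarith, by linarith⟩
  exact ⟨(a + ε)⁻¹, (b + ε)⁻¹, (one_lt_inv₀ (by linarith)).2 (by linarith),
    (one_lt_inv₀ (by linarith)).2 (by linarith),
    ofReal_inv_toReal_inv_add_le (ENNReal.inv_ne_top.1 hp) hε,
    ofReal_inv_toReal_inv_add_le (ENNReal.inv_ne_top.1 hq) hε, by rwa [inv_inv, inv_inv]⟩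

lemma exists_conj_lt_sobolev_exponent {d s p p' q q' : ℝ} (hd : 2 ≤ d) (hds : d.HolderConjugate s)
    (hp : p.HolderConjugate p') (hq : q.HolderConjugate q') (hpq : p⁻¹ + q⁻¹ < 2 / d) :
    ∃ ρ, p' < ρ ∧ 1 / ρ = 2 / s - 1 / q' := by
  have hexp : 2 / s - 1 / q' = 1 - 2 / d + q⁻¹ := by
    rw [div_eq_mul_inv 2 s, one_div, ← hds.one_sub_inv, ← hq.one_sub_inv, div_eq_mul_inv 2 d]
    ring
  have hd1 : 2 / d ≤ 1 := (div_le_one (by linarith)).2 hd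
  have hq0 : 0 < q⁻¹ := inv_pos.2 hq.pos
  refine ⟨(1 - 2 / d + q⁻¹)⁻¹, ?_, by rw [hexp, one_div, inv_inv]⟩
  rw [lt_inv_comm₀ hp.symm.pos (by linarith), ← hp.one_sub_inv]
  linarith

lemma toReal_conjExponent_pos {p : ℝ≥0∞} (hp : 1 < p) : 0 < ((1 - p⁻¹)⁻¹).toReal :=
  ENNReal.toReal_pos (ENNReal.inv_ne_zero.2 (ENNReal.sub_ne_top ENNReal.one_ne_top))
    (ENNReal.inv_ne_top.2 (tsub_pos_of_lt (ENNReal.inv_lt_one.2 hp)).ne')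

end Exponents

section Superharmonic

variable {nbr : V → Finset V} {ω : V → V → ℝ}

lemma VolumeRegular.card_rpow_le {d : ℕ} {C : ℝ} (hd : d ≠ 0) (hC : 0 < C)
    (hreg : VolumeRegular ball d C) (x : V) {R : ℝ} (hR : 1 ≤ R) :
    ((ball x R).card : ℝ) ^ (1 / (d : ℝ)) ≤ C ^ (1 / (d : ℝ)) * R :=
  calc _ ≤ (C * R ^ d) ^ (1 / (d : ℝ)) := by
        gcongr
        exact (hreg x R hR).2
    _ = _ := by rw [Real.mul_rpow hC.le (by positivity), one_div,
        Real.pow_rpow_inv_natCast (by linarith) hd]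

lemma moserConst_le {B : Finset V} (hB : B.Nonempty) (C K s ρ : ℝ) {p q : ℝ} {p' q' : ℝ≥0∞}
    (hp : 0 < p) (hq : 0 < q) (hpp' : ENNReal.ofReal p ≤ p') (hqq' : ENNReal.ofReal q ≤ q') :
    moserConst nbr ω B C K s ρ p q ≤ max 1 (4 * (C * K * (2 * ρ / s)) ^ 2) *
      max 1 (nrmE B p' (mu nbr ω) * nrmE B q' (nu nbr ω)) := by
  have hμ := nrm_le_nrmE hB hp hpp' (mu nbr ω)
  have hν := nrm_le_nrmE hB hq hqq' (nu nbr ω)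
  have hμ0 := nrm_nonneg B p (mu nbr ω)
  have hν0 := nrm_nonneg B q (nu nbr ω)
  rw [moserConst]
  gcongr
  exacts [le_max_right _ _, (mul_le_mul hμ hν hν0 (hμ0.trans hμ)).trans (le_max_right _ _)]

lemma IsWeightedGraph.inv_le_rpow_mul_nrm (hG : IsWeightedGraph G nbr ω)
    (hball : ∀ (x : V) (r : ℝ) (y : V), y ∈ ball x r ↔ (G.dist x y : ℝ) ≤ r)
    {d s K C p p' q q' ρ : ℝ} (hds : d.HolderConjugate s) (hK : 0 ≤ K)
    (hiso : Isoperimetric G s K) (hp : p.HolderConjugate p') (hq : q.HolderConjugate q')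
    (hρ : p' < ρ) (hρq : 1 / ρ = 2 / s - 1 / q') {x₀ : V} {n : ℝ} (hn : 0 < n)
    (hvol : ((ball x₀ n).card : ℝ) ^ (1 / d) ≤ C * n) {D : ℝ} (hD1 : 1 ≤ D)
    (hD : moserConst nbr ω (ball x₀ n) C K s ρ p q ≤ D) {α σ' σ : ℝ} (hα : 0 < α)
    (hσ' : 0 ≤ σ') (hσ : σ' < σ) (hσ1 : σ ≤ 1) {u : V → ℝ} (hu : ∀ x, 0 < u x)
    (hsup : ∀ x ∈ ball x₀ (σ * n), lap nbr ω u x ≤ 0) {x : V} (hx : x ∈ ball x₀ (σ' * n)) :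
    (u x)⁻¹ ≤ (4 * D / (σ - σ') ^ 2) ^ (p' / (1 - p' / ρ) ^ 2 / α) *
      nrm (ball x₀ (σ * n)) α fun y => (u y)⁻¹ := by
  have hgap : (σ * n - σ' * n) ^ 2 ≤ D * n ^ 2 := by
    rw [← sub_mul, mul_pow]
    gcongr
    nlinarith
  have h := hG.le_rpow_mul_nrm hball hds hK hiso hp hq hρ hρq hn hvol (D := D * n ^ 2) (by gcongr)
    (by gcongr) (mul_le_of_le_one_left hn.le hσ1) hgap hα (fun y => (inv_pos.2 (hu y)).le)
    (fun y hy β hβ => hG.lap_inv_rpow_nonneg hu (hsup y hy) hβ.le) hx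
  rwa [← sub_mul, mul_pow, ← mul_assoc, mul_div_mul_right _ _ (by positivity)] at h

end Superharmonic

end RCM

open RCM in
theorem max_inequality_reciprocal_harmonic_general.{w}
    (d : ℕ) (hd : 2 ≤ d) (Creg Criso : ℝ) (hCreg : 0 < Creg) (hCriso : 0 < Criso)
    (p q : ℝ≥0∞) (hpq : p⁻¹ + q⁻¹ < 2 / (d : ℝ≥0∞)) :
    ∃ κ C₄ : ℝ, 0 < κ ∧ 0 < C₄ ∧
      ∀ (V : Type w) (G : SimpleGraph V) (nbr : V → Finset V) (ω : V → V → ℝ)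
        (_ : IsWeightedGraph G nbr ω) (_ : G.Connected) (ball : V → ℝ → Finset V)
        (_ : ∀ (x : V) (r : ℝ) (y : V), y ∈ ball x r ↔ (G.dist x y : ℝ) ≤ r)
        (_ : VolumeRegular ball d Creg) (_ : RelativeIsoperimetric G ball Criso)
        (x₀ : V) (n : ℝ) (_ : 1 ≤ n) (u : V → ℝ) (_ : ∀ x, 0 < u x)
        (α : ℝ) (_ : 0 < α) (σ' σ : ℝ) (_ : 0 ≤ σ') (_ : σ' < σ) (_ : σ ≤ 1)
        (_ : ∀ x ∈ ball x₀ (σ * n), lap nbr ω u x ≤ 0),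
        sSup ((fun x => (u x)⁻¹) '' (ball x₀ (σ' * n) : Set V)) ≤
          (C₄ * max 1 (nrmE (ball x₀ n) p (mu nbr ω) * nrmE (ball x₀ n) q (nu nbr ω)) /
              (σ - σ') ^ 2) ^ (2 * ((1 - p⁻¹)⁻¹).toReal * κ / α) *
            nrm (ball x₀ (σ * n)) α (fun x => (u x)⁻¹) := by
  have hd2 : (2 : ℝ) ≤ d := by exact_mod_cast hd
  obtain ⟨P, Q, hP1, hQ1, hPp, hQq, hPQ⟩ := exists_finite_exponents hd hpq
  have hds := Real.HolderConjugate.conjExponent (p := (d : ℝ)) (by linarith)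
  have hP := Real.HolderConjugate.conjExponent hP1
  have hQ := Real.HolderConjugate.conjExponent hQ1
  obtain ⟨ρ, hPρ, hρ⟩ := exists_conj_lt_sobolev_exponent hd2 hds hP hQ hPQ
  have hθ : P.conjExponent / ρ < 1 := (div_lt_one (hP.symm.pos.trans hPρ)).2 hPρ
  have hpstar := toReal_conjExponent_pos ((ENNReal.one_lt_ofReal.2 hP1).trans_le hPp)
  set E := P.conjExponent / (1 - P.conjExponent / ρ) ^ 2
  have hE : 0 < E := div_pos hP.symm.pos (pow_pos (sub_pos.2 hθ) 2)
  set K := Creg ^ 2 / Criso * (3 * Creg) ^ (1 / (d : ℝ))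
  set C₀ := max 1 (4 * (Creg ^ (1 / (d : ℝ)) * K * (2 * ρ / (d : ℝ).conjExponent)) ^ 2)
  refine ⟨E / (2 * ((1 - p⁻¹)⁻¹).toReal), 4 * C₀, by positivity, by positivity, ?_⟩
  intro V G nbr ω hG _ ball hball hreg hriso x₀ n hn u hu α hα σ' σ hσ' hσ hσ1 hsup
  rw [mul_div_cancel₀ E (by positivity), mul_assoc 4]
  refine csSup_le ((ball_nonempty hball (by positivity) x₀).to_set.image _) ?_
  rintro _ ⟨x, hx, rfl⟩
  exact hG.inv_le_rpow_mul_nrm hball hds (by positivity)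
    (hreg.isoperimetric hds hCreg hCriso hball hriso) hP hQ hPρ hρ (by linarith)
    (hreg.card_rpow_le (by omega) hCreg x₀ hn)
    (one_le_mul_of_one_le_of_one_le (le_max_left _ _) (le_max_left _ _))
    (moserConst_le (ball_nonempty hball (by linarith) x₀) _ _ _ _ hP.pos hQ.pos hPp hQq)
    hα hσ' hσ hσ1 hu hsup hx

open RCM in
/-- **Maximal inequality for the reciprocal of a harmonic function.** -/
theorem max_inequality_reciprocal_harmonic
    (d : ℕ) (hd : 2 ≤ d) (Creg Criso : ℝ) (hCreg : 0 < Creg) (hCriso : 0 < Criso)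
    (p q : ℝ≥0∞) (hp : 1 < p) (hq : 1 < q) (hpq : p⁻¹ + q⁻¹ < 2 / (d : ℝ≥0∞)) :
    ∃ κ C₄ : ℝ, 0 < κ ∧ 0 < C₄ ∧
      ∀ (V : Type) (G : SimpleGraph V) (nbr : V → Finset V)
        (_ : ∀ x y, y ∈ nbr x ↔ G.Adj x y)
        (_ : Infinite V) (_ : G.Connected)
        (ball : V → ℝ → Finset V)
        (_ : ∀ (x : V) (r : ℝ) (y : V), y ∈ ball x r ↔ (G.dist x y : ℝ) ≤ r)
        (_ : ∀ (x : V) (r : ℝ), 1 ≤ r →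
              Creg⁻¹ * r ^ d ≤ ((ball x r).card : ℝ) ∧ ((ball x r).card : ℝ) ≤ Creg * r ^ d)
        (_ : ∀ (x : V) (r : ℝ) (A : Finset V), 1 ≤ r → A.Nonempty → A ⊆ ball x r →
              (A.card : ℝ) < ((ball x r).card : ℝ) / 2 →
              Criso / r ≤ ((RCM.relBdry G (ball x r) A).card : ℝ) / (A.card : ℝ))
        (ω : V → V → ℝ)
        (_ : ∀ x y, ω x y = ω y x)
        (_ : ∀ x y, G.Adj x y → 0 < ω x y)
        (_ : ∀ x y, ¬ G.Adj x y → ω x y = 0)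
        (x₀ : V) (n : ℝ) (_ : 1 ≤ n)
        (u : V → ℝ) (_ : ∀ x, 0 < u x)
        (_ : ∀ x ∈ ball x₀ n, lap nbr ω u x = 0)
        (α : ℝ) (_ : 0 < α)
        (σ' σ : ℝ) (_ : 1 / 2 ≤ σ') (_ : σ' < σ) (_ : σ ≤ 1),
        sSup ((fun x => (u x)⁻¹) '' (ball x₀ (σ' * n) : Set V)) ≤
          (C₄ * max 1 (nrmE (ball x₀ n) p (mu nbr ω) * nrmE (ball x₀ n) q (nu nbr ω)) /
              (σ - σ') ^ 2) ^ (2 * ((1 - p⁻¹)⁻¹).toReal * κ / α) *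
            nrm (ball x₀ (σ * n)) α (fun x => (u x)⁻¹) := by
  obtain ⟨κ, C₄, hκ, hC₄, hmax⟩ :=
    max_inequality_reciprocal_harmonic_general d hd Creg Criso hCreg hCriso p q hpq
  exact ⟨κ, C₄, hκ, hC₄, fun V G nbr hnbr _ hconn ball hball hreg hriso ω hsymm hω hω0 x₀ n hn u hu
    hharm α hα σ' σ hσ' hσ hσ1 => hmax V G nbr ω ⟨hnbr, hsymm, hω, hω0⟩ hconn ball hball hreg hriso
      x₀ n hn u hu α hα σ' σ (by linarith) hσ hσ1 fun x hx =>
        (hharm x (ball_subset_ball hball (mul_le_of_le_one_left (by linarith) hσ1) x₀ hx)).le⟩
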